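/- (Chen–Lin logarithmic moment bound on growing balls.) Under the blow-up setup, there exist a sequence l_i → +∞ with l_i ≤ δ_i/(2 r_i) and a constant C' independent of i such that ∫_{B(0, l_i)} (1/2π) log|θ̃| · V_i(x_i + r_i θ̃) e^{v_i(θ̃)} dθ̃ ≤ C' for all i. -/

import Mathlib

open MeasureTheory Filter Metric

abbrev E2 := EuclideanSpace ℝ (Fin 2)

noncomputable def pd (j : Fin 2) (u : E2 → ℝ) (x : E2) : ℝ :=
  fderiv ℝ u x (EuclideanSpace.single j 1)

noncomputable def lapl (u : E2 → ℝ) (x : E2) : ℝ :=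
  pd 0 (pd 0 u) x + pd 1 (pd 1 u) x

namespace Aux

noncomputable def q (z : E2) : ℝ := max 0 (1 - ‖z‖ ^ 2)

lemma normsq (z : E2) : ‖z‖ ^ 2 = z 0 ^ 2 + z 1 ^ 2 := by
  simp [EuclideanSpace.real_norm_sq_eq, Fin.sum_univ_two]

lemma coord_le (z : E2) (j : Fin 2) : |z j| ≤ ‖z‖ := by
  simpa using PiLp.norm_apply_le z j

lemma fderiv_eq (F : E2 → ℝ) (y z : E2) :
    fderiv ℝ F y z = z 0 * pd 0 F y + z 1 * pd 1 F y := by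
  have hz : z = z 0 • EuclideanSpace.single (0 : Fin 2) (1 : ℝ)
      + z 1 • EuclideanSpace.single (1 : Fin 2) (1 : ℝ) := by
    ext i
    fin_cases i <;> simp
  conv_lhs => rw [hz]
  simp [pd]

lemma q_nonneg (z : E2) : 0 ≤ q z := le_max_left _ _

lemma q_le_one (z : E2) : q z ≤ 1 := by
  unfold q
  exact max_le (by norm_num) (by nlinarith [sq_nonneg ‖z‖])

lemma q_zero {z : E2} (h : 1 ≤ ‖z‖) : q z = 0 := by
  unfold q
  exact max_eq_left (by nlinarith)

lemma q_cont : Continuous q := by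
  unfold q; fun_prop

lemma hasDerivAt_maxpow (n : ℕ) (s : ℝ) :
    HasDerivAt (fun s : ℝ => max 0 s ^ (n + 2)) ((n + 2 : ℝ) * max 0 s ^ (n + 1)) s := by
  rcases lt_trichotomy s 0 with h | h | h
  · rw [max_eq_left h.le]
    have : (fun s : ℝ => max 0 s ^ (n + 2)) =ᶠ[nhds s] fun _ => (0 : ℝ) := by
      filter_upwards [Iio_mem_nhds h] with t ht
      rw [max_eq_left (le_of_lt ht)]; simp
    simpa using (hasDerivAt_const s (0 : ℝ)).congr_of_eventuallyEq this
  · subst h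
    simp only [max_self]
    rw [hasDerivAt_iff_isLittleO]
    simp only [max_self, sub_zero]
    have : (fun x : ℝ => max 0 x ^ (n + 2)) =o[nhds 0] fun x => x := by
      have h1 : (fun x : ℝ => max 0 x ^ (n + 2)) =O[nhds 0] fun x => x ^ (n + 2) := by
        refine Asymptotics.IsBigO.of_bound 1 (Eventually.of_forall fun x => ?_)
        rw [norm_pow, norm_pow, one_mul]
        gcongr
        rw [Real.norm_eq_abs, Real.norm_eq_abs, abs_of_nonneg (le_max_left _ _)]
        exact max_le (abs_nonneg _) (le_abs_self _)
      refine h1.trans_isLittleO ?_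
      simpa using (Asymptotics.isLittleO_pow_pow (𝕜 := ℝ) (show 1 < n + 2 by omega))
    simpa using this
  · rw [max_eq_right h.le]
    have : (fun s : ℝ => max 0 s ^ (n + 2)) =ᶠ[nhds s] fun s => s ^ (n + 2) := by
      filter_upwards [Ioi_mem_nhds h] with t ht
      rw [max_eq_right (le_of_lt ht)]
    have h2 := (hasDerivAt_pow (n + 2) s).congr_of_eventuallyEq this
    simpa using h2

lemma contDiff_maxpow (n : ℕ) : ContDiff ℝ 1 (fun s : ℝ => max 0 s ^ (n + 2)) := by
  rw [contDiff_one_iff_deriv]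
  refine ⟨fun s => (hasDerivAt_maxpow n s).differentiableAt, ?_⟩
  have : deriv (fun s : ℝ => max 0 s ^ (n + 2)) = fun s => ((n + 2 : ℝ) * max 0 s ^ (n + 1)) := by
    ext s; exact (hasDerivAt_maxpow n s).deriv
  rw [this]; fun_prop

lemma hasFDerivAt_qpow (n : ℕ) (z : E2) :
    HasFDerivAt (fun z => q z ^ (n + 2))
      ((-(2 * (n + 2 : ℝ) * q z ^ (n + 1))) • innerSL ℝ z) z := by
  have h1 : HasFDerivAt (fun z : E2 => 1 - ‖z‖ ^ 2) (-(2 • innerSL ℝ z)) z := by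
    have := (hasStrictFDerivAt_norm_sq z).hasFDerivAt.const_sub (1 : ℝ)
    exact this
  have h2 := (hasDerivAt_maxpow n (1 - ‖z‖ ^ 2)).comp_hasFDerivAt z h1
  refine HasFDerivAt.congr_fderiv (f := fun z => q z ^ (n + 2)) h2 ?_
  rw [smul_neg, ← Nat.cast_smul_eq_nsmul ℝ, smul_smul, ← neg_smul]
  congr 1
  simp only [q]
  push_cast
  ring

lemma inner_single (z : E2) (j : Fin 2) :
    innerSL ℝ z (EuclideanSpace.single j (1 : ℝ)) = z j := by
  simp [EuclideanSpace.inner_single_right]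

lemma pd_qpow (n : ℕ) (k : Fin 2) (z : E2) :
    pd k (fun z => q z ^ (n + 2)) z = -(2 * (n + 2 : ℝ) * q z ^ (n + 1)) * z k := by
  unfold pd
  rw [(hasFDerivAt_qpow n z).fderiv, smul_apply, inner_single]
  rfl

lemma contDiff_qpow (n : ℕ) : ContDiff ℝ 1 (fun z => q z ^ (n + 2)) := by
  have h : ContDiff ℝ 1 (fun z : E2 => 1 - ‖z‖ ^ 2) := contDiff_const.sub (contDiff_norm_sq ℝ)
  exact (contDiff_maxpow n).comp h

lemma hasFDerivAt_coord (j : Fin 2) (z : E2) :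
    HasFDerivAt (fun z : E2 => z j) (EuclideanSpace.proj (𝕜 := ℝ) j : E2 →L[ℝ] ℝ) z :=
  (EuclideanSpace.proj (𝕜 := ℝ) j : E2 →L[ℝ] ℝ).hasFDerivAt

lemma contDiff_coord (j : Fin 2) : ContDiff ℝ 1 (fun z : E2 => z j) :=
  (EuclideanSpace.proj (𝕜 := ℝ) j : E2 →L[ℝ] ℝ).contDiff

lemma pd_coord_q2 (j k : Fin 2) (z : E2) :
    pd k (fun z => z j * q z ^ 2) z
      = (if j = k then 1 else 0) * q z ^ 2 - 4 * z j * z k * q z := by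
  have h1 := (hasFDerivAt_coord j z).mul (hasFDerivAt_qpow 0 z)
  have h2 : HasFDerivAt (fun z : E2 => z j * q z ^ 2) _ z := h1
  unfold pd
  rw [h2.fderiv]
  simp only [add_apply, smul_apply, inner_single]
  simp
  ring

lemma compact_of_zero {G : E2 → ℝ} {R : ℝ} (h : ∀ z, R ≤ ‖z‖ → G z = 0) : HasCompactSupport G := by
  apply HasCompactSupport.intro (isCompact_closedBall (0 : E2) R)
  intro x hx
  apply h
  simp at hx
  exact hx.le

lemma pd_cont {F : E2 → ℝ} (hF : ContDiff ℝ 1 F) (k : Fin 2) : Continuous (pd k F) := by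
  unfold pd
  exact (hF.continuous_fderiv (by norm_num)).clm_apply continuous_const

lemma pd_contDiff {F : E2 → ℝ} (hF : ContDiff ℝ 2 F) (k : Fin 2) : ContDiff ℝ 1 (pd k F) := by
  unfold pd
  exact (hF.fderiv_right (m := 1) (by norm_num)).clm_apply contDiff_const

lemma lapl_cont {F : E2 → ℝ} (hF : ContDiff ℝ 2 F) : Continuous (lapl F) := by
  unfold lapl
  exact (pd_cont (pd_contDiff hF 0) 0).add (pd_cont (pd_contDiff hF 1) 1)

lemma pd_comm {F : E2 → ℝ} (hF : ContDiff ℝ 2 F) (j k : Fin 2) (x : E2) :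
    pd j (pd k F) x = pd k (pd j F) x := by
  have hs : IsSymmSndFDerivAt ℝ F x := hF.contDiffAt.isSymmSndFDerivAt (by simp)
  have hd : DifferentiableAt ℝ (fderiv ℝ F) x :=
    (hF.fderiv_right (m := 1) (by norm_num)).differentiable (by norm_num) x
  have key : ∀ a b : E2, fderiv ℝ (fun y => fderiv ℝ F y a) x b = fderiv ℝ (fderiv ℝ F) x b a := by
    intro a b
    have := (hd.hasFDerivAt.clm_apply (hasFDerivAt_const a x)).fderiv
    rw [this]; simp
  unfold pd
  rw [key, key]
  exact hs _ _

lemma ibp {F G : E2 → ℝ} (hF : ContDiff ℝ 1 F) (hG : ContDiff ℝ 1 G) (hc : HasCompactSupport G)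
    (k : Fin 2) : ∫ z, pd k F z * G z = - ∫ z, F z * pd k G z := by
  have hcG : HasCompactSupport (pd k G) := by
    unfold pd
    exact hc.fderiv_apply (𝕜 := ℝ) _
  have h := integral_mul_fderiv_eq_neg_fderiv_mul_of_integrable (μ := (volume : Measure E2))
    (f := F) (g := G) (v := EuclideanSpace.single k (1 : ℝ)) ?_ ?_ ?_ ?_ ?_
  · unfold pd
    linarith
  · exact ((pd_cont hF k).mul hG.continuous).integrable_of_hasCompactSupport hc.mul_left
  · exact (hF.continuous.mul (pd_cont hG k)).integrable_of_hasCompactSupport hcG.mul_left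
  · exact (hF.continuous.mul hG.continuous).integrable_of_hasCompactSupport hc.mul_left
  · exact fun x _ => hF.differentiable (by norm_num) x
  · exact fun x _ => hG.differentiable (by norm_num) x

/-- affine rescaling -/
lemma pd_comp {F : E2 → ℝ} (x z : E2) (t : ℝ) (hF : DifferentiableAt ℝ F (x + t • z)) (k : Fin 2) :
    pd k (fun z => F (x + t • z)) z = t * pd k F (x + t • z) := by
  have h1 : HasFDerivAt (fun z : E2 => x + t • z) (t • ContinuousLinearMap.id ℝ E2) z :=
    ((hasFDerivAt_id z).const_smul t).const_add x
  have h2 := hF.hasFDerivAt.comp z h1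
  unfold pd
  have h3 : fderiv ℝ (fun z => F (x + t • z)) z = _ := h2.fderiv
  rw [h3]
  simp

lemma hasDerivAt_avg {F ω : E2 → ℝ} (hF : ContDiff ℝ 1 F) (hω : Continuous ω)
    (h0 : ∀ z, 1 ≤ ‖z‖ → ω z = 0) (x : E2) (t : ℝ) :
    HasDerivAt (fun t : ℝ => ∫ z, F (x + t • z) * ω z)
      (∫ z, (z 0 * pd 0 F (x + t • z) + z 1 * pd 1 F (x + t • z)) * ω z) t := by
  have hcω := compact_of_zero h0
  have p0 := pd_cont hF 0
  have p1 := pd_cont hF 1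
  have hFc := hF.continuous
  have c0 : Continuous (fun z : E2 => z 0) := (contDiff_coord 0).continuous
  have c1 : Continuous (fun z : E2 => z 1) := (contDiff_coord 1).continuous
  let D : ℝ × E2 → ℝ := fun p => p.2 0 * pd 0 F (x + p.1 • p.2) + p.2 1 * pd 1 F (x + p.1 • p.2)
  have hD : Continuous D := by
    apply Continuous.add
    · exact (c0.comp continuous_snd).mul (p0.comp (by fun_prop))
    · exact (c1.comp continuous_snd).mul (p1.comp (by fun_prop))
  obtain ⟨C, hC⟩ := ((isCompact_Icc (a := t - 1) (b := t + 1)).prod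
    (isCompact_closedBall (0 : E2) 1)).exists_bound_of_continuousOn hD.continuousOn
  refine (hasDerivAt_integral_of_dominated_loc_of_deriv_le (s := Set.Icc (t - 1) (t + 1))
    (bound := fun z => C * |ω z|) (F' := fun s z => D (s, z) * ω z)
    (Icc_mem_nhds (by linarith) (by linarith)) ?_ ?_ ?_ ?_ ?_ ?_).2
  · refine Eventually.of_forall fun s => Continuous.aestronglyMeasurable ?_
    exact (hFc.comp (by fun_prop)).mul hω
  · refine Continuous.integrable_of_hasCompactSupport ?_ hcω.mul_left
    exact (hFc.comp (by fun_prop)).mul hω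
  · refine Continuous.aestronglyMeasurable ?_
    exact (hD.comp (by fun_prop)).mul hω
  · refine Eventually.of_forall fun z s hs => ?_
    by_cases hz : 1 ≤ ‖z‖
    · simp [h0 z hz]
    · rw [norm_mul]
      have h1 := hC (s, z) ⟨hs, by simpa using (not_le.mp hz).le⟩
      exact mul_le_mul_of_nonneg_right h1 (norm_nonneg _)
  · refine Continuous.integrable_of_hasCompactSupport (by fun_prop) ?_
    apply compact_of_zero (R := 1)
    intro z hz; simp [h0 z hz]
  · refine Eventually.of_forall fun z s hs => ?_
    have h1 : HasDerivAt (fun s : ℝ => x + s • z) z s := by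
      simpa using ((hasDerivAt_id s).smul_const z).const_add x
    have h2 := (hF.differentiable (by norm_num) (x + s • z)).hasFDerivAt.comp_hasDerivAt s h1
    rw [fderiv_eq] at h2
    exact h2.mul_const _

end Aux

namespace Aux

lemma aff_contDiff {F : E2 → ℝ} {n : WithTop ℕ∞} (hF : ContDiff ℝ n F) (x : E2) (t : ℝ) :
    ContDiff ℝ n (fun z => F (x + t • z)) :=
  hF.comp (by fun_prop)

lemma int_cc {F G : E2 → ℝ} (hF : Continuous F) (hG : Continuous G) (h0 : ∀ z, 1 ≤ ‖z‖ → G z = 0) :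
    Integrable (fun z => F z * G z) :=
  (hF.mul hG).integrable_of_hasCompactSupport (compact_of_zero h0).mul_left

lemma coord_cont (j : Fin 2) : Continuous (fun z : E2 => z j) := (contDiff_coord j).continuous

lemma q2_zero {z : E2} (n : ℕ) (h : 1 ≤ ‖z‖) : q z ^ (n + 1) = 0 := by simp [q_zero h]

lemma A_deriv {v : E2 → ℝ} (hv : ContDiff ℝ 2 v) (x : E2) (t : ℝ) :
    HasDerivAt (fun t : ℝ => ∫ z, v (x + t • z) * (6 * q z ^ 2))
      (t * ∫ z, lapl v (x + t • z) * q z ^ 3) t := by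
  have hv1 : ContDiff ℝ 1 v := hv.of_le (by norm_num)
  have h := hasDerivAt_avg hv1 (ω := fun z => 6 * q z ^ 2) (by have := q_cont; fun_prop)
    (fun z hz => by simp [q_zero hz]) x t
  convert h using 1
  have key : ∀ k, ∫ z, (pd k v (x + t • z)) * (z k * (6 * q z ^ 2))
      = t * ∫ z, pd k (pd k v) (x + t • z) * q z ^ 3 := by
    intro k
    have hk := pd_contDiff hv k
    have hk' := aff_contDiff hk x t
    have h1 := ibp hk' (contDiff_qpow 1) (compact_of_zero fun z hz => q2_zero 2 hz) k
    have h2 : ∀ z, pd k (fun z => pd k v (x + t • z)) z = t * pd k (pd k v) (x + t • z) :=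
      fun z => pd_comp x z t (hk.differentiable (by norm_num) _) k
    simp only [h2, pd_qpow] at h1
    rw [← integral_const_mul]
    calc _ = - ∫ z, pd k v (x + t • z) * (-(2 * ((1 : ℕ) + 2 : ℝ) * q z ^ (1 + 1)) * z k) := by
          rw [← integral_neg]; congr 1; ext z; push_cast; ring
      _ = _ := by rw [← h1]; congr 1; ext z; ring
  have c : ∀ k, Continuous fun z => pd k v (x + t • z) :=
    fun k => (aff_contDiff (pd_contDiff hv k) x t).continuous
  have c2 : ∀ k, Continuous fun z => pd k (pd k v) (x + t • z) :=
    fun k => (pd_cont (pd_contDiff hv k) k).comp (by fun_prop)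
  have e1 : ∫ z, lapl v (x + t • z) * q z ^ 3 = (∫ z, pd 0 (pd 0 v) (x + t • z) * q z ^ 3)
      + ∫ z, pd 1 (pd 1 v) (x + t • z) * q z ^ 3 := by
    rw [← integral_add (int_cc (G := fun z => q z ^ 3) (c2 0) (q_cont.pow 3) fun z hz => q2_zero 2 hz)
      (int_cc (G := fun z => q z ^ 3) (c2 1) (q_cont.pow 3) fun z hz => q2_zero 2 hz)]
    congr 1; ext z; simp only [lapl]; ring
  have e2 : ∫ z, (z 0 * pd 0 v (x + t • z) + z 1 * pd 1 v (x + t • z)) * (6 * q z ^ 2)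
      = (∫ z, (pd 0 v (x + t • z)) * (z 0 * (6 * q z ^ 2)))
      + ∫ z, (pd 1 v (x + t • z)) * (z 1 * (6 * q z ^ 2)) := by
    rw [← integral_add]
    · congr 1; ext z; ring
    · exact int_cc (c 0) ((coord_cont 0).mul (by have := q_cont; fun_prop)) fun z hz => by simp [q_zero hz]
    · exact int_cc (c 1) ((coord_cont 1).mul (by have := q_cont; fun_prop)) fun z hz => by simp [q_zero hz]
  rw [e1, e2, key, key]; ring

lemma cq2_contDiff (j : Fin 2) : ContDiff ℝ 1 (fun z : E2 => z j * q z ^ 2) :=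
  (contDiff_coord j).mul (contDiff_qpow 0)

lemma D_deriv {v : E2 → ℝ} (hv : ContDiff ℝ 2 v) (x : E2) {t : ℝ} (ht : 0 < t) (j : Fin 2) :
    HasDerivAt (fun t : ℝ => ∫ z, pd j v (x + t • z) * (6 * q z ^ 2))
      (∫ z, lapl v (x + t • z) * (6 * (z j * q z ^ 2))) t := by
  have hj := pd_contDiff hv j
  have h := hasDerivAt_avg hj (ω := fun z => 6 * q z ^ 2) (by have := q_cont; fun_prop)
    (fun z hz => by simp [q_zero hz]) x t
  convert h using 1
  have key : ∀ k, ∫ z, pd k (pd j v) (x + t • z) * (z k * q z ^ 2)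
      = ∫ z, pd k (pd k v) (x + t • z) * (z j * q z ^ 2) := by
    intro k
    have hk := pd_contDiff hv k
    have hk' := aff_contDiff hk x t
    have h1 := ibp hk' (cq2_contDiff k) (compact_of_zero (R := 1) fun z hz => by simp [q_zero hz]) j
    have h2 := ibp hk' (cq2_contDiff j) (compact_of_zero (R := 1) fun z hz => by simp [q_zero hz]) k
    have h3 : ∀ z i, pd i (fun z => pd k v (x + t • z)) z = t * pd i (pd k v) (x + t • z) :=
      fun z i => pd_comp x z t (hk.differentiable (by norm_num) _) i
    simp only [h3, pd_coord_q2] at h1 h2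
    have h4 : ∫ z, t * pd j (pd k v) (x + t • z) * (z k * q z ^ 2)
       = ∫ z, t * pd k (pd k v) (x + t • z) * (z j * q z ^ 2) := by
      rw [h1, h2]; congr 2; ext z
      simp only [eq_comm (a := k) (b := j)]
      ring
    simp only [mul_assoc] at h4
    rw [integral_const_mul, integral_const_mul] at h4
    have h5 := mul_left_cancel₀ ht.ne' h4
    rw [← h5]
    congr 1; ext z; rw [pd_comm hv]
  have c2 : ∀ k i, Continuous fun z => pd k (pd i v) (x + t • z) :=
    fun k i => (pd_cont (pd_contDiff hv i) k).comp (by fun_prop)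
  have I : ∀ k i l, Integrable fun z => pd k (pd i v) (x + t • z) * (z l * q z ^ 2) := fun k i l =>
    int_cc (c2 k i) ((coord_cont l).mul (q_cont.pow 2)) fun z hz => by simp [q_zero hz]
  have e1 : ∫ z, lapl v (x + t • z) * (6 * (z j * q z ^ 2))
      = 6 * ((∫ z, pd 0 (pd 0 v) (x + t • z) * (z j * q z ^ 2))
      + ∫ z, pd 1 (pd 1 v) (x + t • z) * (z j * q z ^ 2)) := by
    rw [← integral_add (I _ _ _) (I _ _ _), ← integral_const_mul]
    congr 1; ext z; simp only [lapl]; ring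
  have e2 : ∫ z, (z 0 * pd 0 (pd j v) (x + t • z) + z 1 * pd 1 (pd j v) (x + t • z)) * (6 * q z ^ 2)
      = 6 * ((∫ z, pd 0 (pd j v) (x + t • z) * (z 0 * q z ^ 2))
      + ∫ z, pd 1 (pd j v) (x + t • z) * (z 1 * q z ^ 2)) := by
    rw [← integral_add (I _ _ _) (I _ _ _), ← integral_const_mul]
    congr 1; ext z; ring
  rw [e1, e2, key, key]

lemma D_val {v : E2 → ℝ} (hv : ContDiff ℝ 2 v) (x : E2) {t : ℝ} (ht : 0 < t) (j : Fin 2) :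
    ∫ z, pd j v (x + t • z) * (6 * q z ^ 2) = t⁻¹ * ∫ z, v (x + t • z) * (24 * (z j * q z)) := by
  have hv1 : ContDiff ℝ 1 v := hv.of_le (by norm_num)
  have h1 := ibp (aff_contDiff hv1 x t) (contDiff_qpow 0) (compact_of_zero fun z hz => q2_zero 1 hz) j
  have h2 : ∀ z, pd j (fun z => v (x + t • z)) z = t * pd j v (x + t • z) :=
      fun z => pd_comp x z t (hv1.differentiable (by norm_num) _) j
  simp only [h2, pd_qpow] at h1
  have h3 : ∫ z, v (x + t • z) * (24 * (z j * q z)) = 6 * (- ∫ z, v (x + t • z) * (-(2 * ((0 : ℕ) + 2 : ℝ) * q z ^ (0 + 1)) * z j)) := by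
    rw [← integral_neg, ← integral_const_mul]; congr 1; ext z; push_cast; ring
  rw [h3, ← h1]
  rw [← integral_const_mul, ← integral_const_mul]
  congr 1; ext z; field_simp

lemma int_q2 : ∫ z : E2, 6 * q z ^ 2 = 2 * Real.pi := by
  have h := integral_fun_norm_addHaar (volume : Measure E2) (fun r => 6 * (max 0 (1 - r ^ 2)) ^ 2)
  have h1 : ∀ z : E2, 6 * q z ^ 2 = 6 * (max 0 (1 - ‖z‖ ^ 2)) ^ 2 := fun z => rfl
  simp_rw [h1]
  rw [h]
  have hb : volume.real (ball (0 : E2) 1) = Real.pi := by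
    rw [Measure.real, EuclideanSpace.volume_ball_fin_two]; simp [Real.pi_nonneg]
  rw [hb]
  have h2 : ∫ y in Set.Ioi (0 : ℝ), y ^ (Module.finrank ℝ E2 - 1) • (6 * (max 0 (1 - y ^ 2)) ^ 2)
      = ∫ y in (0 : ℝ)..1, y * (6 * (1 - y ^ 2) ^ 2) := by
    rw [intervalIntegral.integral_of_le (by norm_num)]
    rw [setIntegral_eq_of_subset_of_forall_sdiff_eq_zero (t := Set.Ioi (0:ℝ)) (s := Set.Ioc (0:ℝ) 1)
      measurableSet_Ioi (fun x hx => hx.1)]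
    · apply setIntegral_congr_fun measurableSet_Ioc
      intro y hy
      simp only [finrank_euclideanSpace, Fintype.card_fin, smul_eq_mul]
      rw [max_eq_right (by nlinarith [hy.1, hy.2])]
      norm_num
    · intro y hy
      have : 1 < y := by
        by_contra hh
        exact hy.2 ⟨hy.1, not_lt.mp hh⟩
      rw [max_eq_left (by nlinarith)]; simp
  rw [h2]
  have h3 : ∫ y in (0 : ℝ)..1, y * (6 * (1 - y ^ 2) ^ 2) = 1 := by
    have : ∀ y ∈ Set.uIcc (0 : ℝ) 1, HasDerivAt (fun y : ℝ => -(1 - y ^ 2) ^ 3) (y * (6 * (1 - y ^ 2) ^ 2)) y := by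
      intro y _
      have := (((hasDerivAt_pow 2 y).const_sub 1).pow 3).neg
      refine HasDerivAt.congr_deriv this ?_
      push_cast; ring
    rw [intervalIntegral.integral_eq_sub_of_hasDerivAt this]
    · norm_num
    · exact (by fun_prop : Continuous fun y : ℝ => y * (6 * (1 - y ^ 2) ^ 2)).intervalIntegrable _ _
  rw [h3]; simp [finrank_euclideanSpace]

end Aux

namespace Aux

lemma integral_scale (F : E2 → ℝ) (x : E2) {t : ℝ} (ht : 0 < t) :
    ∫ z, F (x + t • z) = (t ^ 2)⁻¹ * ∫ y, F y := by
  have h := Measure.integral_comp_smul (volume : Measure E2) (fun y => F (x + y)) t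
  rw [h, integral_add_left_eq_self (μ := (volume : Measure E2)) F x]
  simp [finrank_euclideanSpace, abs_of_pos ht]

lemma mem_ball_scale (x z : E2) {t : ℝ} (ht : 0 < t) : x + t • z ∈ ball x t ↔ z ∈ ball (0 : E2) 1 := by
  simp [norm_smul, abs_of_pos ht]
  constructor
  · intro h; nlinarith
  · intro h; nlinarith

lemma setIntegral_scale (F : E2 → ℝ) (x : E2) {t : ℝ} (ht : 0 < t) :
    ∫ z in ball (0 : E2) 1, F (x + t • z) = (t ^ 2)⁻¹ * ∫ y in ball x t, F y := by
  rw [← integral_indicator measurableSet_ball, ← integral_indicator measurableSet_ball,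
    ← integral_scale _ x ht]
  congr 1; ext z
  by_cases h : z ∈ ball (0 : E2) 1
  · rw [Set.indicator_of_mem h, Set.indicator_of_mem ((mem_ball_scale x z ht).2 h)]
  · rw [Set.indicator_of_notMem h, Set.indicator_of_notMem (fun h' => h ((mem_ball_scale x z ht).1 h'))]

lemma vol_ball_one : volume.real (ball (0 : E2) 1) = Real.pi := by
  rw [Measure.real, EuclideanSpace.volume_ball_fin_two]; simp [Real.pi_nonneg]

lemma intOn_ball {F : E2 → ℝ} (hF : Continuous F) (x : E2) (t : ℝ) : IntegrableOn F (ball x t) :=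
  (hF.continuousOn.integrableOn_compact (isCompact_closedBall x t)).mono_set ball_subset_closedBall

lemma abs_avg_le {f ω : E2 → ℝ} (hf : Continuous f) {x : E2} {t a : ℝ} (ht : 0 < t)
    (h0 : ∀ z, 1 ≤ ‖z‖ → ω z = 0) (ha : ∀ z, |ω z| ≤ a) (hnn : ∀ y ∈ ball x t, 0 ≤ f y) :
    |∫ z, f (x + t • z) * ω z| ≤ a * ((t ^ 2)⁻¹ * ∫ y in ball x t, f y) := by
  have hs : ∫ z, f (x + t • z) * ω z = ∫ z in ball (0 : E2) 1, f (x + t • z) * ω z := by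
    symm
    apply setIntegral_eq_integral_of_forall_compl_eq_zero
    intro z hz
    rw [h0 z (by simpa using hz)]; simp
  rw [hs, ← setIntegral_scale f x ht, ← integral_const_mul, ← Real.norm_eq_abs]
  apply norm_integral_le_of_norm_le
  · exact (intOn_ball (hf.comp (by fun_prop)) _ _).const_mul a
  · refine (ae_restrict_iff' measurableSet_ball).2 (Eventually.of_forall fun z hz => ?_)
    have h1 := hnn _ ((mem_ball_scale x z ht).2 hz)
    rw [norm_mul, Real.norm_eq_abs, Real.norm_eq_abs, abs_of_nonneg h1]
    nlinarith [ha z]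

lemma setInt_ball_le {f : E2 → ℝ} (hf : Continuous f) {x : E2} {t b : ℝ} (ht : 0 < t)
    (hb : ∀ y ∈ ball x t, f y ≤ b) : (t ^ 2)⁻¹ * ∫ y in ball x t, f y ≤ Real.pi * b := by
  rw [← setIntegral_scale f x ht]
  calc _ ≤ ∫ z in ball (0 : E2) 1, b := by
        apply setIntegral_mono_on (intOn_ball (hf.comp (by fun_prop)) _ _)
          (intOn_ball continuous_const _ _) measurableSet_ball
        intro z hz
        exact hb _ ((mem_ball_scale x z ht).2 hz)
    _ = _ := by rw [setIntegral_const, vol_ball_one]; rfl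

structure Hyp (b C0 L τ c : ℝ) (v W : E2 → ℝ) : Prop where
  v2 : ContDiff ℝ 2 v
  neg : ∀ x, ‖x‖ < L → v x ≤ 0
  v0 : v 0 = 0
  eq : ∀ x, ‖x‖ < L → -lapl v x = W x * Real.exp (v x)
  Wnn : ∀ x, ‖x‖ < L → 0 ≤ W x
  Wb : ∀ x, ‖x‖ < L → W x ≤ b
  Wc : ∀ x, ‖x‖ < L → |W x - c| ≤ τ
  int : ∫ x in ball (0 : E2) L, Real.exp (v x) ≤ C0
  mass : ∫ x in ball (0 : E2) L, (-lapl v x) ≤ 8 * Real.pi + τ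
  τ0 : 0 ≤ τ
  τ1 : τ ≤ 1
  c0 : 0 ≤ c
  cb : c ≤ b
  L1 : 1 ≤ L

noncomputable def M : ℝ := 8 * Real.pi + 1

lemma M_pos : 0 < M := by unfold M; positivity

namespace Hyp
variable {b C0 L τ c : ℝ} {v W : E2 → ℝ}

lemma gcont (h : Hyp b C0 L τ c v W) : Continuous fun x => -lapl v x := (lapl_cont h.v2).neg

lemma g0 (h : Hyp b C0 L τ c v W) {x : E2} (hx : ‖x‖ < L) : 0 ≤ -lapl v x := by
  rw [h.eq x hx]; exact mul_nonneg (h.Wnn x hx) (Real.exp_pos _).le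

lemma gb (h : Hyp b C0 L τ c v W) {x : E2} (hx : ‖x‖ < L) : -lapl v x ≤ b := by
  rw [h.eq x hx]
  have h1 := h.Wnn x hx
  have h2 := h.Wb x hx
  have h3 : Real.exp (v x) ≤ 1 := Real.exp_le_one_iff.2 (h.neg x hx)
  nlinarith [Real.exp_pos (v x)]

lemma gc (h : Hyp b C0 L τ c v W) {x : E2} (hx : ‖x‖ < L) : -lapl v x ≤ c + τ := by
  rw [h.eq x hx]
  have h1 := h.Wnn x hx
  have h2 := abs_le.1 (h.Wc x hx)
  have h3 : Real.exp (v x) ≤ 1 := Real.exp_le_one_iff.2 (h.neg x hx)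
  nlinarith [Real.exp_pos (v x), h2.2]

lemma b0 (h : Hyp b C0 L τ c v W) : 0 ≤ b := h.c0.trans h.cb

lemma massSub (h : Hyp b C0 L τ c v W) {S : Set E2} (hS : S ⊆ ball 0 L) :
    ∫ x in S, (-lapl v x) ≤ M := by
  refine le_trans (setIntegral_mono_set (intOn_ball h.gcont 0 L) ?_ (LE.le.eventuallyLE hS)) ?_
  · refine (ae_restrict_iff' measurableSet_ball).2 (Eventually.of_forall fun z hz => ?_)
    exact h.g0 (by simpa using hz)
  · unfold M; linarith [h.mass, h.τ1]

end Hyp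

lemma mono_deriv {f f' : ℝ → ℝ} {a b : ℝ} (hab : a ≤ b) (hc : ContinuousOn f (Set.Icc a b))
    (hd : ∀ t ∈ Set.Ioo a b, HasDerivAt f (f' t) t) (hn : ∀ t ∈ Set.Ioo a b, 0 ≤ f' t) : f a ≤ f b := by
  have := monotoneOn_of_deriv_nonneg (convex_Icc a b) hc
    (by rw [interior_Icc]; exact fun t ht => (hd t ht).differentiableAt.differentiableWithinAt)
    (by rw [interior_Icc]; intro t ht; rw [(hd t ht).deriv]; exact hn t ht)
  exact this (Set.left_mem_Icc.2 hab) (Set.right_mem_Icc.2 hab) hab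

noncomputable def Av (v : E2 → ℝ) (t : ℝ) : ℝ := ∫ z, v ((0 : E2) + t • z) * (6 * q z ^ 2)

namespace Hyp
variable {b C0 L τ c : ℝ} {v W : E2 → ℝ}

lemma Av_deriv (h : Hyp b C0 L τ c v W) (t : ℝ) :
    HasDerivAt (Av v) (t * ∫ z, lapl v ((0 : E2) + t • z) * q z ^ 3) t := A_deriv h.v2 0 t

lemma Av_zero (h : Hyp b C0 L τ c v W) : Av v 0 = 0 := by
  simp [Av, h.v0]

lemma Av_cont (h : Hyp b C0 L τ c v W) (S : Set ℝ) : ContinuousOn (Av v) S :=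
  fun t _ => (h.Av_deriv t).continuousAt.continuousWithinAt

lemma q3_abs (z : E2) : |q z ^ 3| ≤ 1 := by
  rw [abs_of_nonneg (pow_nonneg (q_nonneg z) _)]
  exact pow_le_one₀ (q_nonneg z) (q_le_one z)

lemma Av_d1 (h : Hyp b C0 L τ c v W) {t k : ℝ} (ht : 0 < t) (htL : t ≤ L)
    (hk : (t ^ 2)⁻¹ * ∫ y in ball (0 : E2) t, (-lapl v y) ≤ k) :
    -(t * k) ≤ t * ∫ z, lapl v ((0 : E2) + t • z) * q z ^ 3 := by
  have h1 := abs_avg_le h.gcont (x := 0) (a := 1) (ω := fun z => q z ^ 3) ht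
    (fun z hz => q2_zero 2 hz) (fun z => q3_abs z)
    (fun y hy => h.g0 (by rw [mem_ball_zero_iff] at hy; linarith))
  have h2 : ∫ z, -lapl v ((0 : E2) + t • z) * q z ^ 3 = -∫ z, lapl v ((0 : E2) + t • z) * q z ^ 3 := by
    rw [← integral_neg]; congr 1; ext z; ring
  rw [h2, one_mul] at h1
  have h3 := (abs_le.1 (h1.trans hk)).2
  nlinarith

lemma Av_lower1 (h : Hyp b C0 L τ c v W) {k t : ℝ} (ht : 0 ≤ t) (htL : t ≤ L)
    (hk : ∀ x, ‖x‖ < L → -lapl v x ≤ k) : -(k * Real.pi * t ^ 2 / 2) ≤ Av v t := by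
  have := mono_deriv (f := fun s => Av v s + k * Real.pi * s ^ 2 / 2) ht
    (f' := fun s => s * (∫ z, lapl v ((0 : E2) + s • z) * q z ^ 3) + s * (Real.pi * k))
    ((h.Av_cont _).add (by fun_prop)) ?_ ?_
  · simp only [h.Av_zero] at this
    nlinarith
  · intro s hs
    have h2 : HasDerivAt (fun s : ℝ => k * Real.pi * s ^ 2 / 2) (s * (Real.pi * k)) s := by
      have := ((hasDerivAt_pow 2 s).const_mul (k * Real.pi)).div_const 2
      refine this.congr_deriv ?_
      push_cast; ring
    exact (h.Av_deriv s).add h2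
  · intro s hs
    have h1 := h.Av_d1 hs.1 (hs.2.le.trans htL) (setInt_ball_le h.gcont hs.1
      (fun y hy => hk y (by rw [mem_ball_zero_iff] at hy; linarith [hs.2])))
    linarith

lemma Av_lower2 (h : Hyp b C0 L τ c v W) {t : ℝ} (ht : 1 ≤ t) (htL : t ≤ L) :
    -(b * Real.pi + M * Real.log t) ≤ Av v t := by
  have h0 := h.Av_lower1 zero_le_one h.L1 (fun x hx => h.gb hx)
  have := mono_deriv (f := fun s => Av v s + M * Real.log s) ht
    (f' := fun s => s * (∫ z, lapl v ((0 : E2) + s • z) * q z ^ 3) + M * s⁻¹)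
    ((h.Av_cont _).add (continuousOn_const.mul (Real.continuousOn_log.mono
      (fun s hs => by have := hs.1; simp; linarith)))) ?_ ?_
  · simp only [Real.log_one] at this
    have : 0 ≤ b * Real.pi := mul_nonneg h.b0 Real.pi_nonneg
    nlinarith
  · intro s hs
    exact (h.Av_deriv s).add ((Real.hasDerivAt_log (by linarith [hs.1])).const_mul M)
  · intro s hs
    have hs0 : 0 < s := by linarith [hs.1]
    have h1 := h.Av_d1 (k := (s ^ 2)⁻¹ * M) hs0 (hs.2.le.trans htL)
      (mul_le_mul_of_nonneg_left (h.massSub (ball_subset_ball (hs.2.le.trans htL))) (by positivity))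
    have h2 : s * ((s ^ 2)⁻¹ * M) = M * s⁻¹ := by field_simp
    linarith

lemma int6q2 : Integrable fun z : E2 => 6 * q z ^ 2 := by
  refine Continuous.integrable_of_hasCompactSupport (by have := q_cont; fun_prop) ?_
  exact compact_of_zero (R := 1) fun z hz => by simp [q_zero hz]

/-- lower bound for the exponential integral -/
lemma exp_lower (h : Hyp b C0 L τ c v W) {t : ℝ} (ht : 0 < t) :
    2 * Real.pi + Av v t ≤ 6 * ((t ^ 2)⁻¹ * ∫ y in ball (0 : E2) t, Real.exp (v y)) := by
  have hec : Continuous fun y => Real.exp (v y) := Real.continuous_exp.comp h.v2.continuous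
  have h1 := abs_avg_le (f := fun y => Real.exp (v y)) hec (x := 0) (a := 6) (ω := fun z => 6 * q z ^ 2)
    ht (fun z hz => by simp [q_zero hz]) (fun z => by
      rw [abs_of_nonneg (by positivity)]
      nlinarith [pow_le_one₀ (n := 2) (q_nonneg z) (q_le_one z)])
    (fun y hy => (Real.exp_pos _).le)
  refine le_trans ?_ ((le_abs_self _).trans h1)
  have i1 : Integrable fun z => v ((0 : E2) + t • z) * (6 * q z ^ 2) :=
    int_cc (h.v2.continuous.comp (by fun_prop)) (by have := q_cont; fun_prop)
      fun z hz => by simp [q_zero hz]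
  have i2 : Integrable fun z => Real.exp (v ((0 : E2) + t • z)) * (6 * q z ^ 2) :=
    int_cc (F := fun z => Real.exp (v ((0 : E2) + t • z))) (hec.comp (by fun_prop)) (by have := q_cont; fun_prop)
      fun z hz => by simp [q_zero hz]
  rw [Av, ← int_q2, ← integral_add int6q2 i1]
  apply integral_mono (int6q2.add i1) i2
  intro z
  have := Real.add_one_le_exp (v ((0 : E2) + t • z))
  have h3 : 0 ≤ 6 * q z ^ 2 := by positivity
  simp only [Pi.add_apply]
  nlinarith

lemma c_lower (h : Hyp b C0 L τ c v W) {t : ℝ} (ht : 0 < t) (htL : t ≤ L) (hC : 6 * C0 ≤ Real.pi * t ^ 2) :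
    2 / t ^ 2 ≤ c + τ := by
  have h1 := h.exp_lower ht
  have h2 := h.Av_lower1 ht.le htL (fun x hx => h.gc hx)
  have h3 : ∫ y in ball (0 : E2) t, Real.exp (v y) ≤ C0 := by
    refine le_trans (setIntegral_mono_set (intOn_ball (Real.continuous_exp.comp h.v2.continuous) 0 L) ?_
      (LE.le.eventuallyLE (ball_subset_ball htL))) h.int
    exact Eventually.of_forall fun z => (Real.exp_pos _).le
  have h4 : 6 * ((t ^ 2)⁻¹ * ∫ y in ball (0 : E2) t, Real.exp (v y)) ≤ Real.pi := by
    calc _ ≤ 6 * ((t ^ 2)⁻¹ * C0) := by gcongr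
      _ = (6 * C0) / t ^ 2 := by ring
      _ ≤ Real.pi := by rw [div_le_iff₀ (by positivity)]; exact hC
  rw [div_le_iff₀ (by positivity)]
  have : Real.pi * 2 ≤ Real.pi * ((c + τ) * t ^ 2) := by nlinarith
  exact le_of_mul_le_mul_left this Real.pi_pos

lemma n1_lower (h : Hyp b C0 L τ c v W) (hc : τ ≤ c) :
    (c - τ) * (Real.pi / (3 * (b + 2))) ≤ ∫ y in ball (0 : E2) 1, (-lapl v y) := by
  have hb := h.b0
  set s : ℝ := Real.sqrt (2 / (b + 2)) with hs
  have hs2 : s ^ 2 = 2 / (b + 2) := Real.sq_sqrt (by positivity)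
  have hs0 : 0 < s := Real.sqrt_pos.2 (by positivity)
  have hs1 : s ≤ 1 := by
    rw [hs]; apply Real.sqrt_le_one.2
    rw [div_le_one (by positivity)]; linarith
  have h1 := h.exp_lower hs0
  have h2 := h.Av_lower1 hs0.le (hs1.trans h.L1) (fun x hx => h.gb hx)
  have h5 : b * s ^ 2 ≤ 2 := by
    rw [hs2, mul_div_assoc', div_le_iff₀ (by positivity)]; linarith
  have h6 : Real.pi / (3 * (b + 2)) ≤ ∫ y in ball (0 : E2) s, Real.exp (v y) := by
    have : Real.pi ≤ 6 * ((s ^ 2)⁻¹ * ∫ y in ball (0 : E2) s, Real.exp (v y)) := by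
      nlinarith [Real.pi_pos]
    rw [hs2] at this
    have e : 6 * ((2 / (b + 2))⁻¹ * ∫ y in ball (0 : E2) s, Real.exp (v y))
      = (∫ y in ball (0 : E2) s, Real.exp (v y)) * (3 * (b + 2)) := by
      field_simp; ring
    rw [e] at this
    rw [div_le_iff₀ (by positivity)]
    exact this
  have hec : Continuous fun y => Real.exp (v y) := Real.continuous_exp.comp h.v2.continuous
  calc _ ≤ (c - τ) * ∫ y in ball (0 : E2) s, Real.exp (v y) :=
        mul_le_mul_of_nonneg_left h6 (by linarith)
    _ = ∫ y in ball (0 : E2) s, (c - τ) * Real.exp (v y) := by rw [integral_const_mul]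
    _ ≤ ∫ y in ball (0 : E2) s, (-lapl v y) := by
        apply setIntegral_mono_on ((intOn_ball hec 0 s).const_mul _) (intOn_ball h.gcont 0 s) measurableSet_ball
        intro y hy
        have hy' : ‖y‖ < L := by rw [mem_ball_zero_iff] at hy; linarith [h.L1]
        rw [h.eq y hy']
        have := (abs_le.1 (h.Wc y hy')).1
        have h3 := Real.exp_pos (v y)
        nlinarith
    _ ≤ _ := by
        refine setIntegral_mono_set (intOn_ball h.gcont 0 1) ?_
          (LE.le.eventuallyLE (ball_subset_ball hs1))
        refine (ae_restrict_iff' measurableSet_ball).2 (Eventually.of_forall fun z hz => ?_)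
        exact h.g0 (by rw [mem_ball_zero_iff] at hz; linarith [h.L1])

end Hyp
end Aux

namespace Aux

noncomputable def Dv (v : E2 → ℝ) (j : Fin 2) (x : E2) (t : ℝ) : ℝ :=
  ∫ z, pd j v (x + t • z) * (6 * q z ^ 2)

noncomputable def Er (b ρ : ℝ) : ℝ := 384 / ρ * (b * Real.pi + M * Real.log (4 * ρ))

lemma Er_tendsto (b : ℝ) : Tendsto (Er b) atTop (nhds 0) := by
  have h1 : Tendsto (fun ρ : ℝ => ρ⁻¹) atTop (nhds 0) := tendsto_inv_atTop_zero
  have h2 : Tendsto (fun ρ : ℝ => Real.log (4 * ρ) / (4 * ρ)) atTop (nhds 0) := by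
    have h := Real.isLittleO_log_id_atTop.tendsto_div_nhds_zero
    exact h.comp (tendsto_id.const_mul_atTop (by norm_num : (0:ℝ) < 4))
  have h3 : Tendsto (fun ρ : ℝ => 384 * (b * Real.pi) * ρ⁻¹ + 384 * M * 4 * (Real.log (4 * ρ) / (4 * ρ)))
      atTop (nhds (384 * (b * Real.pi) * 0 + 384 * M * 4 * 0)) :=
    (h1.const_mul _).add (h2.const_mul _)
  simp only [mul_zero, add_zero] at h3
  refine h3.congr fun ρ => ?_
  unfold Er
  by_cases hρ : ρ = 0
  · simp [hρ]
  · field_simp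

lemma abs_sub_deriv {f f' k k' : ℝ → ℝ} {a b : ℝ} (hab : a ≤ b) (hc : ContinuousOn f (Set.Icc a b))
    (hck : ContinuousOn k (Set.Icc a b))
    (hd : ∀ t ∈ Set.Ioo a b, HasDerivAt f (f' t) t) (hdk : ∀ t ∈ Set.Ioo a b, HasDerivAt k (k' t) t)
    (hn : ∀ t ∈ Set.Ioo a b, |f' t| ≤ k' t) : |f b - f a| ≤ k b - k a := by
  have h1 := mono_deriv (f := fun t => k t - f t) hab (hck.sub hc) (fun t ht => (hdk t ht).sub (hd t ht))
    (fun t ht => by have := (abs_le.1 (hn t ht)).2; linarith)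
  have h2 := mono_deriv (f := fun t => k t + f t) hab (hck.add hc) (fun t ht => (hdk t ht).add (hd t ht))
    (fun t ht => by have := (abs_le.1 (hn t ht)).1; linarith)
  rw [abs_le]; constructor <;> linarith

lemma zq_abs (z : E2) (j : Fin 2) (n : ℕ) : |z j * q z ^ (n + 1)| ≤ 1 := by
  by_cases hz : 1 ≤ ‖z‖
  · simp [q_zero hz]
  · rw [abs_mul, abs_of_nonneg (pow_nonneg (q_nonneg z) _)]
    have h1 := coord_le z j
    have h2 := pow_le_one₀ (n := n + 1) (q_nonneg z) (q_le_one z)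
    have h3 := pow_nonneg (q_nonneg z) (n + 1)
    nlinarith [abs_nonneg (z j), not_le.1 hz]

namespace Hyp
variable {b C0 L τ c : ℝ} {v W : E2 → ℝ}

lemma Dv_zero (_h : Hyp b C0 L τ c v W) (j : Fin 2) (x : E2) : Dv v j x 0 = 2 * Real.pi * pd j v x := by
  unfold Dv
  simp only [zero_smul, add_zero]
  rw [integral_const_mul, int_q2]; ring

lemma Dv_cont (h : Hyp b C0 L τ c v W) (j : Fin 2) (x : E2) : Continuous (Dv v j x) := by
  rw [continuous_iff_continuousAt]
  intro t
  exact (hasDerivAt_avg (pd_contDiff h.v2 j) (ω := fun z => 6 * q z ^ 2) (by have := q_cont; fun_prop)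
    (fun z hz => by simp [q_zero hz]) x t).continuousAt

lemma ball_sub {x : E2} {t : ℝ} (hx : ‖x‖ + t ≤ L) : ball x t ⊆ ball (0 : E2) L := by
  apply ball_subset_ball'
  rw [dist_zero_right]; linarith

lemma Dv_d1 (h : Hyp b C0 L τ c v W) (j : Fin 2) {x : E2} {t : ℝ} (ht : 0 < t) (hx : ‖x‖ + t ≤ L) :
    |∫ z, lapl v (x + t • z) * (6 * (z j * q z ^ 2))| ≤ 6 * ((t ^ 2)⁻¹ * ∫ y in ball x t, (-lapl v y)) := by
  have h1 := abs_avg_le h.gcont (x := x) (a := 6) (ω := fun z => 6 * (z j * q z ^ 2)) ht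
    (fun z hz => by simp [q_zero hz]) (fun z => by
      rw [abs_mul]
      have := zq_abs z j 1
      norm_num at this ⊢
      linarith)
    (fun y hy => h.g0 (by simpa using ball_sub hx hy))
  have h2 : ∫ z, -lapl v (x + t • z) * (6 * (z j * q z ^ 2)) = -∫ z, lapl v (x + t • z) * (6 * (z j * q z ^ 2)) := by
    rw [← integral_neg]; congr 1; ext z; ring
  rwa [h2, abs_neg] at h1

lemma Dv_err (h : Hyp b C0 L τ c v W) (j : Fin 2) {x : E2} {ε : ℝ} (hε : 0 ≤ ε) (hx : ‖x‖ + ε ≤ L) :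
    |Dv v j x ε - 2 * Real.pi * pd j v x| ≤ 6 * Real.pi * b * ε := by
  have := abs_sub_deriv (f := Dv v j x) (k := fun t => 6 * Real.pi * b * t) hε (h.Dv_cont j x).continuousOn
    (by fun_prop) (fun t ht => D_deriv h.v2 x ht.1 j)
    (k' := fun t => 6 * Real.pi * b) (fun t ht => by simpa using (hasDerivAt_id t).const_mul (6 * Real.pi * b))
    (fun t ht => by
      have hx' : ‖x‖ + t ≤ L := by linarith [ht.2]
      refine (h.Dv_d1 j ht.1 hx').trans ?_
      have := setInt_ball_le h.gcont ht.1 (x := x) (b := b)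
        (fun y hy => h.gb (by simpa using ball_sub hx' hy))
      linarith)
  rw [h.Dv_zero] at this
  simpa using this

lemma Dv_err2 (h : Hyp b C0 L τ c v W) (j : Fin 2) {x : E2} {ρ : ℝ} (hρ : 1 ≤ ρ) (hx : ‖x‖ + ρ ≤ L) :
    |Dv v j x ρ - Dv v j x 1| ≤ 6 * M := by
  have := abs_sub_deriv (f := Dv v j x) (k := fun t => -(6 * M * t⁻¹)) hρ (h.Dv_cont j x).continuousOn
    (by
      refine (continuousOn_const.mul (continuousOn_inv₀.mono ?_)).neg
      intro t ht; have := ht.1; simp; linarith)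
    (fun t ht => D_deriv h.v2 x (by linarith [ht.1]) j)
    (k' := fun t => 6 * M * (t ^ 2)⁻¹) (fun t ht => by
      have := ((hasDerivAt_inv (x := t) (by linarith [ht.1])).const_mul (6 * M)).neg
      refine this.congr_deriv ?_
      ring)
    (fun t ht => by
      have hx' : ‖x‖ + t ≤ L := by linarith [ht.2]
      have ht0 : 0 < t := by linarith [ht.1]
      refine (h.Dv_d1 j ht0 hx').trans ?_
      have := mul_le_mul_of_nonneg_left (h.massSub (ball_sub hx')) (by positivity : 0 ≤ (t ^ 2)⁻¹)
      linarith)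
  refine this.trans ?_
  have : 0 ≤ 6 * M * ρ⁻¹ := by have := M_pos; positivity
  simp; linarith

lemma int_v (h : Hyp b C0 L τ c v W) {ρ : ℝ} (hρ : 1 ≤ ρ) (hL : 4 * ρ ≤ L) :
    ((4 * ρ) ^ 2)⁻¹ * ∫ y in ball (0 : E2) (2 * ρ), (-v y) ≤ b * Real.pi + M * Real.log (4 * ρ) := by
  have h1 := h.Av_lower2 (t := 4 * ρ) (by linarith) hL
  have hρ0 : 0 < 4 * ρ := by linarith
  refine le_trans ?_ (neg_le.1 h1)
  rw [← integral_indicator measurableSet_ball, ← integral_scale _ (0 : E2) hρ0, Av, ← integral_neg]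
  have hvc := h.v2.continuous
  apply integral_mono_of_nonneg
  · refine Eventually.of_forall fun z => ?_
    apply Set.indicator_nonneg
    intro y hy
    have := h.neg y (by rw [mem_ball_zero_iff] at hy; linarith)
    linarith
  · exact (int_cc (hvc.comp (by fun_prop)) (by have := q_cont; fun_prop)
      fun z hz => by simp [q_zero hz]).neg
  · refine Eventually.of_forall fun z => ?_
    simp only
    have hneg : ‖z‖ < 1 → v (0 + (4 * ρ) • z) ≤ 0 := by
      intro hz
      apply h.neg
      rw [zero_add, norm_smul, Real.norm_of_nonneg hρ0.le]
      nlinarith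
    by_cases hz : (0 : E2) + (4 * ρ) • z ∈ ball (0 : E2) (2 * ρ)
    · rw [Set.indicator_of_mem hz]
      rw [zero_add, mem_ball_zero_iff, norm_smul, Real.norm_of_nonneg hρ0.le] at hz
      have hz1 : ‖z‖ < 1 / 2 := by nlinarith
      have hq : 3 / 4 ≤ q z := by
        unfold q; apply le_max_of_le_right
        nlinarith [norm_nonneg z]
      have := hneg (by linarith)
      have h6 : 1 ≤ 6 * q z ^ 2 := by nlinarith
      nlinarith
    · rw [Set.indicator_of_notMem hz]
      by_cases hz1 : 1 ≤ ‖z‖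
      · simp [q_zero hz1]
      · have := hneg (not_le.1 hz1)
        have h6 : 0 ≤ 6 * q z ^ 2 := by positivity
        nlinarith

lemma Dv_far (h : Hyp b C0 L τ c v W) (j : Fin 2) {x : E2} {ρ : ℝ} (hρ : 1 ≤ ρ) (hx : ‖x‖ ≤ ρ)
    (hL : 4 * ρ ≤ L) : |Dv v j x ρ| ≤ Er b ρ := by
  have hρ0 : 0 < ρ := by linarith
  have hsub : ball x ρ ⊆ ball (0 : E2) (2 * ρ) := by
    apply ball_subset_ball'; rw [dist_zero_right]; linarith
  have hnn : ∀ y ∈ ball (0 : E2) (2 * ρ), 0 ≤ -v y := fun y hy => by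
    have := h.neg y (by rw [mem_ball_zero_iff] at hy; linarith)
    linarith
  have hvc := h.v2.continuous
  unfold Dv
  rw [D_val h.v2 x hρ0 j, abs_mul, abs_of_pos (inv_pos.2 hρ0)]
  have h1 := abs_avg_le (f := fun y => -v y) hvc.neg (x := x) (a := 24) (ω := fun z => 24 * (z j * q z)) hρ0
    (fun z hz => by simp [q_zero hz]) (fun z => by
      rw [abs_mul]
      have := zq_abs z j 0
      norm_num at this ⊢
      linarith)
    (fun y hy => hnn y (hsub hy))
  have h2 : ∫ z, -v (x + ρ • z) * (24 * (z j * q z)) = -∫ z, v (x + ρ • z) * (24 * (z j * q z)) := by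
    rw [← integral_neg]; congr 1; ext z; ring
  rw [h2, abs_neg] at h1
  have h3 : ∫ y in ball x ρ, (-v y) ≤ ∫ y in ball (0 : E2) (2 * ρ), (-v y) := by
    refine setIntegral_mono_set (intOn_ball hvc.neg _ _) ?_ (LE.le.eventuallyLE hsub)
    exact (ae_restrict_iff' measurableSet_ball).2 (Eventually.of_forall fun z hz => hnn z hz)
  have h4 := h.int_v hρ hL
  have h5 : (ρ ^ 2)⁻¹ * ∫ y in ball x ρ, (-v y) ≤ 16 * (b * Real.pi + M * Real.log (4 * ρ)) := by
    have e : ((4 * ρ) ^ 2)⁻¹ * ∫ y in ball (0 : E2) (2 * ρ), (-v y)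
       = ((ρ ^ 2)⁻¹ * ∫ y in ball (0 : E2) (2 * ρ), (-v y)) / 16 := by rw [mul_pow, mul_inv]; ring
    have := mul_le_mul_of_nonneg_left h3 (by positivity : 0 ≤ (ρ ^ 2)⁻¹)
    linarith
  unfold Er
  calc _ ≤ ρ⁻¹ * (24 * (16 * (b * Real.pi + M * Real.log (4 * ρ)))) := by
        apply mul_le_mul_of_nonneg_left _ (by positivity)
        linarith
    _ = _ := by ring

lemma grad_bound (h : Hyp b C0 L τ c v W) (j : Fin 2) {x : E2} {ρ : ℝ} (hρ : 1 ≤ ρ) (hx : ‖x‖ ≤ ρ)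
    (hL : 4 * ρ ≤ L) (hE : Er b ρ ≤ 1) : |pd j v x| ≤ 1 + 6 * Real.pi * b + 6 * M := by
  have h1 := h.Dv_far j hρ hx hL
  have h2 := h.Dv_err2 (x := x) j hρ (by linarith)
  have h3 := h.Dv_err (x := x) j zero_le_one (by linarith)
  have h4 : |2 * Real.pi * pd j v x| ≤ 1 + 6 * Real.pi * b + 6 * M := by
    rw [abs_le] at *
    constructor <;> linarith [h1.1, h1.2, h2.1, h2.2, h3.1, h3.2]
  rw [abs_mul, abs_of_pos (by positivity)] at h4
  have := Real.pi_gt_three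
  nlinarith [abs_nonneg (pd j v x)]

end Hyp
end Aux

namespace Aux

noncomputable def pk (t : ℝ) (w : E2) : ℝ := q (t⁻¹ • w) ^ 3

noncomputable def ker (ε ρ : ℝ) (w : E2) : ℝ := (pk ρ w - pk ε w) / ‖w‖ ^ 2

lemma pk_cont (t : ℝ) : Continuous (pk t) := by
  have := q_cont
  unfold pk; fun_prop

lemma ker_meas (ε ρ : ℝ) : Measurable (ker ε ρ) := by
  unfold ker
  exact ((pk_cont ρ).sub (pk_cont ε)).measurable.div (by fun_prop)

lemma ker_neg (ε ρ : ℝ) (w : E2) : ker ε ρ (-w) = ker ε ρ w := by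
  simp [ker, pk, q]

lemma pk_eq (t : ℝ) (w : E2) : pk t w = max 0 (1 - (t⁻¹) ^ 2 * ‖w‖ ^ 2) ^ 3 := by
  simp [pk, q, norm_smul, mul_pow]

lemma pk_nonneg (t : ℝ) (w : E2) : 0 ≤ pk t w := pow_nonneg (q_nonneg _) _

lemma pk_le_one (t : ℝ) (w : E2) : pk t w ≤ 1 := pow_le_one₀ (q_nonneg _) (q_le_one _)

lemma pk_mono {ε ρ : ℝ} (hε : 0 < ε) (h : ε ≤ ρ) (w : E2) : pk ε w ≤ pk ρ w := by
  rw [pk_eq, pk_eq]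
  have : ρ⁻¹ ≤ ε⁻¹ := inv_anti₀ hε h
  have h0 : 0 < ρ⁻¹ := inv_pos.2 (hε.trans_le h)
  gcongr

lemma pk_lower (ε : ℝ) (w : E2) : 1 - 3 * ((ε⁻¹) ^ 2 * ‖w‖ ^ 2) ≤ pk ε w := by
  rw [pk_eq]
  set s := (ε⁻¹) ^ 2 * ‖w‖ ^ 2
  have hs : 0 ≤ s := by positivity
  rcases le_total s 1 with h | h
  · rw [max_eq_right (by linarith)]
    nlinarith [mul_nonneg (mul_nonneg hs hs) (by linarith : (0:ℝ) ≤ 3 - s)]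
  · have : 0 ≤ max 0 (1 - s) ^ 3 := by positivity
    linarith

lemma ker_nonneg {ε ρ : ℝ} (hε : 0 < ε) (h : ε ≤ ρ) (w : E2) : 0 ≤ ker ε ρ w :=
  div_nonneg (sub_nonneg.2 (pk_mono hε h w)) (by positivity)

lemma ker_le (ε ρ : ℝ) (w : E2) : ker ε ρ w ≤ 3 * (ε⁻¹) ^ 2 := by
  unfold ker
  apply div_le_of_le_mul₀ (by positivity) (by positivity)
  have := pk_lower ε w
  have := pk_le_one ρ w
  nlinarith

lemma ker_mul_le (ε ρ : ℝ) (w : E2) : ker ε ρ w * ‖w‖ ^ 2 ≤ 1 := by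
  unfold ker
  by_cases hw : ‖w‖ ^ 2 = 0
  · simp [hw]
  · rw [div_mul_cancel₀ _ hw]
    have := pk_nonneg ε w
    have := pk_le_one ρ w
    linarith

lemma pk_zero {t : ℝ} (ht : 0 < t) {w : E2} (hw : t ≤ ‖w‖) : pk t w = 0 := by
  unfold pk
  rw [q_zero]
  · simp
  · rw [norm_smul, Real.norm_of_nonneg (by positivity), inv_mul_eq_div, one_le_div ht]
    exact hw

lemma ker_zero {ε ρ : ℝ} (hε : 0 < ε) (h : ε ≤ ρ) {w : E2} (hw : ρ ≤ ‖w‖) : ker ε ρ w = 0 := by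
  unfold ker
  rw [pk_zero (hε.trans_le h) hw, pk_zero hε (h.trans hw)]; simp

lemma pk_deriv (w : E2) {t : ℝ} (ht : 0 < t) :
    HasDerivAt (fun t => pk t w) (6 * (t⁻¹) ^ 3 * q (t⁻¹ • w) ^ 2 * ‖w‖ ^ 2) t := by
  have h1 : HasDerivAt (fun t : ℝ => 1 - (t⁻¹) ^ 2 * ‖w‖ ^ 2) (2 * (t⁻¹) ^ 3 * ‖w‖ ^ 2) t := by
    have := (((hasDerivAt_inv ht.ne').pow 2).mul_const (‖w‖ ^ 2)).const_sub 1
    refine this.congr_deriv ?_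
    push_cast; field_simp
  have h2 := (hasDerivAt_maxpow 1 (1 - (t⁻¹) ^ 2 * ‖w‖ ^ 2)).comp t h1
  have h3 : (fun t => pk t w) = (fun s : ℝ => max 0 s ^ (1 + 2)) ∘ (fun t : ℝ => 1 - (t⁻¹) ^ 2 * ‖w‖ ^ 2) := by
    ext t; rw [pk_eq]; rfl
  rw [h3]
  refine h2.congr_deriv ?_
  have : q (t⁻¹ • w) = max 0 (1 - (t⁻¹) ^ 2 * ‖w‖ ^ 2) := by simp [q, norm_smul, mul_pow]
  rw [this]; push_cast; ring

lemma ker_deriv (ε : ℝ) (w : E2) (j : Fin 2) {t : ℝ} (ht : 0 < t) :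
    HasDerivAt (fun t => w j * ker ε t w) (6 * (t⁻¹) ^ 3 * (w j * q (t⁻¹ • w) ^ 2)) t := by
  by_cases hw : w = 0
  · subst hw
    simpa using hasDerivAt_const t (0 : ℝ)
  · have h1 := (((pk_deriv w ht).sub_const (pk ε w)).div_const (‖w‖ ^ 2)).const_mul (w j)
    refine h1.congr_deriv ?_
    have : ‖w‖ ≠ 0 := norm_ne_zero_iff.2 hw
    field_simp

noncomputable def Ph (g : E2 → ℝ) (j : Fin 2) (x : E2) (ε t : ℝ) : ℝ :=
  ∫ w, g (x + w) * (w j * ker ε t w)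

lemma intOn_cst (a : ℝ) (r : ℝ) : Integrable ((ball (0 : E2) r).indicator fun _ => a) :=
  (intOn_ball continuous_const 0 r).integrable_indicator measurableSet_ball

lemma Ph_meas {g : E2 → ℝ} (hg : Continuous g) (j : Fin 2) (x : E2) (ε t : ℝ) :
    Measurable fun w => g (x + w) * (w j * ker ε t w) :=
  (hg.measurable.comp (by fun_prop)).mul ((coord_cont j).measurable.mul (ker_meas ε t))

lemma Ph_deriv {g : E2 → ℝ} (hg : Continuous g) (j : Fin 2) (x : E2) {ε t : ℝ} (hε : 0 < ε) (ht : ε ≤ t) :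
    HasDerivAt (Ph g j x ε) (∫ z, g (x + t • z) * (6 * (z j * q z ^ 2))) t := by
  have ht0 : 0 < t := hε.trans_le ht
  have hε2 : 0 < ε / 2 := by linarith
  obtain ⟨C, hC⟩ := (isCompact_closedBall (0 : E2) (t + 1)).exists_bound_of_continuousOn
    (f := fun w => g (x + w)) (by fun_prop)
  have hC0 : 0 ≤ C := (norm_nonneg _).trans (hC 0 (by simp; linarith))
  have key := (hasDerivAt_integral_of_dominated_loc_of_deriv_le (μ := (volume : Measure E2))
    (s := Set.Ioo (ε / 2) (t + 1)) (x₀ := t)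
    (F := fun s w => g (x + w) * (w j * ker ε s w))
    (bound := (ball (0 : E2) (t + 1)).indicator fun _ => C * (6 * ((ε / 2)⁻¹) ^ 3 * (t + 1)))
    (F' := fun s w => g (x + w) * (6 * (s⁻¹) ^ 3 * (w j * q (s⁻¹ • w) ^ 2)))
    (Ioo_mem_nhds (by linarith) (by linarith)) ?_ ?_ ?_ ?_ ?_ ?_).2
  · refine key.congr_deriv ?_
    rw [← mul_one (∫ w, _), ← mul_inv_cancel₀ (pow_ne_zero 2 ht0.ne'), mul_comm, mul_assoc, ← integral_scale _ 0 ht0,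
      ← integral_const_mul]
    congr 1; ext z
    have e1 : t⁻¹ • ((0 : E2) + t • z) = z := by rw [zero_add, smul_smul, inv_mul_cancel₀ ht0.ne', one_smul]
    rw [e1]
    simp only [zero_add, PiLp.smul_apply, smul_eq_mul]
    field_simp
  · exact Eventually.of_forall fun s => (Ph_meas hg j x ε s).aestronglyMeasurable
  · refine Integrable.mono' (intOn_cst (C * ((t + 1) * (3 * (ε⁻¹) ^ 2))) (t + 1))
      (Ph_meas hg j x ε t).aestronglyMeasurable (Eventually.of_forall fun w => ?_)
    by_cases hw : w ∈ ball (0 : E2) (t + 1)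
    · rw [Set.indicator_of_mem hw, norm_mul, norm_mul]
      have h1 := hC w (ball_subset_closedBall hw)
      rw [mem_ball_zero_iff] at hw
      have h2 : ‖w j‖ ≤ t + 1 := (coord_le w j).trans hw.le
      have h3 : ‖ker ε t w‖ ≤ 3 * (ε⁻¹) ^ 2 := by
        rw [Real.norm_of_nonneg (ker_nonneg hε ht w)]; exact ker_le _ _ _
      gcongr
    · rw [Set.indicator_of_notMem hw, ker_zero hε ht (by rw [mem_ball_zero_iff] at hw; linarith)]
      simp
  · refine Continuous.aestronglyMeasurable ?_
    have := q_cont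
    have := coord_cont j
    fun_prop
  · refine Eventually.of_forall fun w s hs => ?_
    have hs0 : 0 < s := hε2.trans hs.1
    by_cases hw : w ∈ ball (0 : E2) (t + 1)
    · rw [Set.indicator_of_mem hw]
      have h1 := hC w (ball_subset_closedBall hw)
      rw [mem_ball_zero_iff] at hw
      have h2 : ‖w j‖ ≤ t + 1 := (coord_le w j).trans hw.le
      have h3 : ‖q (s⁻¹ • w) ^ 2‖ ≤ 1 := by
        rw [Real.norm_of_nonneg (by positivity)]; exact pow_le_one₀ (q_nonneg _) (q_le_one _)
      have h4 : ‖6 * (s⁻¹) ^ 3‖ ≤ 6 * ((ε / 2)⁻¹) ^ 3 := by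
        rw [Real.norm_of_nonneg (by positivity)]
        have : s⁻¹ ≤ (ε / 2)⁻¹ := inv_anti₀ hε2 hs.1.le
        gcongr
      have h5 : ‖w j‖ * ‖q (s⁻¹ • w) ^ 2‖ ≤ (t + 1) * 1 := by gcongr
      rw [mul_one, ← norm_mul] at h5
      rw [norm_mul]
      refine mul_le_mul h1 ?_ (norm_nonneg _) hC0
      rw [norm_mul]
      exact mul_le_mul h4 h5 (norm_nonneg _) (by positivity)
    · rw [Set.indicator_of_notMem hw]
      have h1 : q (s⁻¹ • w) = 0 := by
        apply q_zero
        rw [norm_smul, Real.norm_of_nonneg (by positivity), inv_mul_eq_div, one_le_div hs0]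
        rw [mem_ball_zero_iff] at hw
        linarith [hs.2]
      simp [h1]
  · exact intOn_cst _ _
  · refine Eventually.of_forall fun w s hs => ?_
    exact (ker_deriv ε w j (hε2.trans hs.1)).const_mul _

lemma Hyp.Dv_ident {b C0 L τ c : ℝ} {v W : E2 → ℝ} (h : Hyp b C0 L τ c v W) (j : Fin 2) (x : E2)
    {ε ρ : ℝ} (hε : 0 < ε) (hρ : ε ≤ ρ) :
    Dv v j x ε - Dv v j x ρ = Ph (fun y => -lapl v y) j x ε ρ := by
  have hz : Ph (fun y => -lapl v y) j x ε ε = 0 := by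
    simp [Ph, ker]
  have hd : ∀ t, ε ≤ t → HasDerivAt (fun t => Dv v j x t + Ph (fun y => -lapl v y) j x ε t) 0 t := by
    intro t ht
    have h1 := (D_deriv h.v2 x (hε.trans_le ht) j).add (Ph_deriv h.gcont j x hε ht)
    refine h1.congr_deriv ?_
    have : ∫ z, -lapl v (x + t • z) * (6 * (z j * q z ^ 2)) = -∫ z, lapl v (x + t • z) * (6 * (z j * q z ^ 2)) := by
      rw [← integral_neg]; congr 1; ext z; ring
    rw [this]; ring
  have := constant_of_has_deriv_right_zero (a := ε) (b := ρ)
    (f := fun t => Dv v j x t + Ph (fun y => -lapl v y) j x ε t)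
    (fun t ht => (hd t ht.1).continuousAt.continuousWithinAt)
    (fun t ht => (hd t ht.1).hasDerivWithinAt) ρ (Set.right_mem_Icc.2 hρ)
  simp only [hz] at this
  linarith

end Aux

namespace Aux

noncomputable def psi (κ R : ℝ) (x : E2) : ℝ := 1 - κ * Real.log (1 + ‖x‖ ^ 2 / R ^ 2)

noncomputable def chi (κ R : ℝ) (x : E2) : ℝ := max 0 (psi κ R x) ^ 2

/-- minus the radial derivative of the cutoff -/
noncomputable def eta (κ R : ℝ) (x : E2) : ℝ :=
  4 * κ * max 0 (psi κ R x) * (‖x‖ ^ 2 / (R ^ 2 + ‖x‖ ^ 2))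

structure Cut (κ R : ℝ) : Prop where
  R2 : 2 ≤ R
  κ0 : 0 < κ
  κ1 : κ ≤ 1 / 2
  κR : 1 ≤ 2 * κ * Real.log R

namespace Cut
variable {κ R : ℝ}

lemma arg_pos (R : ℝ) (x : E2) : 0 < 1 + ‖x‖ ^ 2 / R ^ 2 := by positivity

lemma log_nonneg (R : ℝ) (x : E2) : 0 ≤ Real.log (1 + ‖x‖ ^ 2 / R ^ 2) :=
  Real.log_nonneg (by have : 0 ≤ ‖x‖ ^ 2 / R ^ 2 := by positivity
                      linarith)

lemma psi_le (h : Cut κ R) (x : E2) : psi κ R x ≤ 1 := by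
  unfold psi
  have := mul_nonneg h.κ0.le (log_nonneg R x)
  linarith

lemma m_le (h : Cut κ R) (x : E2) : max 0 (psi κ R x) ≤ 1 := max_le zero_le_one (h.psi_le x)

lemma chi_nonneg (κ R : ℝ) (x : E2) : 0 ≤ chi κ R x := by unfold chi; positivity

lemma chi_le (h : Cut κ R) (x : E2) : chi κ R x ≤ 1 :=
  pow_le_one₀ (le_max_left _ _) (h.m_le x)

lemma m_zero (h : Cut κ R) {x : E2} (hx : R ^ 2 ≤ ‖x‖) : max 0 (psi κ R x) = 0 := by
  apply max_eq_left
  unfold psi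
  have hR : 0 < R := by linarith [h.R2]
  have h1 : R ^ 2 ≤ 1 + ‖x‖ ^ 2 / R ^ 2 := by
    have : R ^ 2 ≤ ‖x‖ ^ 2 / R ^ 2 := by
      rw [le_div_iff₀ (by positivity)]; nlinarith [sq_nonneg R]
    linarith
  have h2 := Real.log_le_log (by positivity) h1
  rw [Real.log_pow] at h2
  have h3 := mul_le_mul_of_nonneg_left h2 h.κ0.le
  have := h.κR
  push_cast at h3
  linarith

lemma chi_zero (h : Cut κ R) {x : E2} (hx : R ^ 2 ≤ ‖x‖) : chi κ R x = 0 := by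
  simp [chi, h.m_zero hx]

lemma eta_zero (h : Cut κ R) {x : E2} (hx : R ^ 2 ≤ ‖x‖) : eta κ R x = 0 := by
  simp [eta, h.m_zero hx]

lemma chi_anti (h : Cut κ R) {x y : E2} (hxy : ‖x‖ ≤ ‖y‖) : chi κ R y ≤ chi κ R x := by
  unfold chi psi
  have h1 : Real.log (1 + ‖x‖ ^ 2 / R ^ 2) ≤ Real.log (1 + ‖y‖ ^ 2 / R ^ 2) := by
    apply Real.log_le_log (arg_pos R x)
    gcongr
  have := h.κ0
  gcongr

lemma chi_one (h : Cut κ R) {x : E2} (hx : ‖x‖ ≤ 1) : 1 / 4 ≤ chi κ R x := by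
  have hR := h.R2
  have h1 := Real.log_le_sub_one_of_pos (arg_pos R x)
  have h2 : ‖x‖ ^ 2 / R ^ 2 ≤ 1 := by
    rw [div_le_one (by positivity)]
    nlinarith [norm_nonneg x]
  have h3 : 1 / 2 ≤ psi κ R x := by
    unfold psi
    nlinarith [h.κ0, h.κ1, log_nonneg R x]
  have h4 : 1 / 2 ≤ max 0 (psi κ R x) := le_max_of_le_right h3
  unfold chi
  nlinarith

lemma psi_cd (κ R : ℝ) : ContDiff ℝ 1 (psi κ R) := by
  unfold psi
  refine contDiff_const.sub (contDiff_const.mul (ContDiff.log ?_ (fun x => (arg_pos R x).ne')))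
  exact contDiff_const.add ((contDiff_norm_sq ℝ).div_const _)

lemma chi_cd (κ R : ℝ) : ContDiff ℝ 1 (chi κ R) := (contDiff_maxpow 0).comp (psi_cd κ R)

lemma eta_cont (h : Cut κ R) : Continuous (eta κ R) := by
  have h1 := (psi_cd κ R).continuous
  have hR := h.R2
  unfold eta
  have h2 : Continuous fun x : E2 => ‖x‖ ^ 2 / (R ^ 2 + ‖x‖ ^ 2) :=
    (by fun_prop : Continuous fun x : E2 => ‖x‖ ^ 2).div (by fun_prop) (fun x => by positivity)
  fun_prop

lemma eta_nonneg (h : Cut κ R) (x : E2) : 0 ≤ eta κ R x := by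
  have := h.κ0
  unfold eta; positivity

lemma eta_le1 (h : Cut κ R) (x : E2) : eta κ R x ≤ 4 * κ := by
  have := h.κ0
  have h1 := h.m_le x
  have hR := h.R2
  have h2 : ‖x‖ ^ 2 / (R ^ 2 + ‖x‖ ^ 2) ≤ 1 := by
    rw [div_le_one (by positivity)]; nlinarith
  have h3 : max 0 (psi κ R x) * (‖x‖ ^ 2 / (R ^ 2 + ‖x‖ ^ 2)) ≤ 1 :=
    mul_le_one₀ h1 (by positivity) h2
  unfold eta
  nlinarith

lemma eta_le2 (h : Cut κ R) {x : E2} (hx : ‖x‖ ^ 2 ≤ R) : eta κ R x ≤ 4 * κ / R := by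
  have := h.κ0
  have h1 := h.m_le x
  have hR := h.R2
  have h2 : ‖x‖ ^ 2 / (R ^ 2 + ‖x‖ ^ 2) ≤ 1 / R := by
    rw [div_le_div_iff₀ (by positivity) (by positivity)]; nlinarith [sq_nonneg ‖x‖]
  have h3 : max 0 (psi κ R x) * (‖x‖ ^ 2 / (R ^ 2 + ‖x‖ ^ 2)) ≤ 1 * (1 / R) := by
    gcongr
  unfold eta
  have e : 4 * κ / R = 4 * κ * (1 * (1 / R)) := by ring
  rw [e, mul_assoc (4 * κ)]
  gcongr

lemma pd_chi (h : Cut κ R) (k : Fin 2) (x : E2) :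
    pd k (chi κ R) x = -(4 * κ * max 0 (psi κ R x) * (x k / (R ^ 2 + ‖x‖ ^ 2))) := by
  have hR := h.R2
  have h1 : HasFDerivAt (fun z : E2 => 1 + ‖z‖ ^ 2 / R ^ 2) ((R ^ 2)⁻¹ • (2 • innerSL ℝ x)) x := by
    have := ((hasStrictFDerivAt_norm_sq x).hasFDerivAt.const_mul ((R ^ 2)⁻¹)).const_add (1 : ℝ)
    refine this.congr_of_eventuallyEq (Eventually.of_forall fun z => ?_)
    simp only [div_eq_inv_mul]
  have h2 : HasFDerivAt (psi κ R) _ x := ((h1.log (arg_pos R x).ne').const_mul κ).const_sub 1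
  have h3 := (hasDerivAt_maxpow 0 (psi κ R x)).comp_hasFDerivAt x h2
  have h4 : HasFDerivAt (chi κ R) _ x := h3
  unfold pd
  rw [h4.fderiv]
  simp only [smul_apply, neg_apply, inner_single, smul_eq_mul]
  have := (arg_pos R x).ne'
  have e : (1 + ‖x‖ ^ 2 / R ^ 2)⁻¹ = R ^ 2 / (R ^ 2 + ‖x‖ ^ 2) := by
    rw [← inv_div]; field_simp
  rw [e]
  have e2 : R ^ 2 + ‖x‖ ^ 2 ≠ 0 := by positivity
  simp
  field_simp
  norm_num
  ring

lemma radial (h : Cut κ R) (x : E2) :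
    x 0 * pd 0 (chi κ R) x + x 1 * pd 1 (chi κ R) x = -eta κ R x := by
  rw [h.pd_chi, h.pd_chi, eta, normsq]
  ring

lemma xi_cd (κ R : ℝ) (k : Fin 2) : ContDiff ℝ 1 (fun x : E2 => chi κ R x * x k) :=
  (chi_cd κ R).mul (contDiff_coord k)

lemma pd_xi (κ R : ℝ) (k : Fin 2) (x : E2) :
    pd k (fun x : E2 => chi κ R x * x k) x = chi κ R x + x k * pd k (chi κ R) x := by
  have h1 := (((chi_cd κ R).differentiable (by norm_num) x).hasFDerivAt).mul (hasFDerivAt_coord k x)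
  have h2 : HasFDerivAt (fun x : E2 => chi κ R x * x k) _ x := h1
  unfold pd
  rw [h2.fderiv]
  simp

end Cut

namespace Hyp
variable {b C0 L τ c κ R : ℝ} {v W : E2 → ℝ}

/-- the Pohozaev quantity -/
noncomputable def XV (κ R : ℝ) (v : E2 → ℝ) (x : E2) : ℝ :=
  chi κ R x * (x 0 * pd 0 v x + x 1 * pd 1 v x)

noncomputable def DX (κ R : ℝ) (x : E2) : ℝ := 2 * chi κ R x - eta κ R x

lemma XV_cont (h : Hyp b C0 L τ c v W) : Continuous (XV κ R v) := by
  have hv1 : ContDiff ℝ 1 v := h.v2.of_le (by norm_num)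
  have h1 := pd_cont hv1 0
  have h2 := pd_cont hv1 1
  have h3 := (Cut.chi_cd κ R).continuous
  have h4 := coord_cont 0
  have h5 := coord_cont 1
  unfold XV
  fun_prop

lemma DX_cont (hC : Cut κ R) : Continuous (DX κ R) := by
  have h3 := (Cut.chi_cd κ R).continuous
  have h4 := hC.eta_cont
  unfold DX
  fun_prop

lemma int_supp {F G : E2 → ℝ} {r : ℝ} (hF : Continuous F) (hG : Continuous G) (h0 : ∀ z, r ≤ ‖z‖ → G z = 0) :
    Integrable (fun z => F z * G z) :=
  (hF.mul hG).integrable_of_hasCompactSupport (compact_of_zero h0).mul_left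

lemma XV_zero (hC : Cut κ R) (v : E2 → ℝ) (z : E2) (hz : R ^ 2 ≤ ‖z‖) : XV κ R v z = 0 := by
  simp [XV, hC.chi_zero hz]

lemma DX_zero (hC : Cut κ R) (z : E2) (hz : R ^ 2 ≤ ‖z‖) : DX κ R z = 0 := by
  simp [DX, hC.chi_zero hz, hC.eta_zero hz]

lemma expv_cont (h : Hyp b C0 L τ c v W) : Continuous fun y => Real.exp (v y) :=
  Real.continuous_exp.comp h.v2.continuous

lemma poh1 (h : Hyp b C0 L τ c v W) (hC : Cut κ R) :
    ∫ x, Real.exp (v x) * XV κ R v x = -∫ x, Real.exp (v x) * DX κ R x := by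
  have hv1 : ContDiff ℝ 1 v := h.v2.of_le (by norm_num)
  have hcd : ContDiff ℝ 1 fun y => Real.exp (v y) := Real.contDiff_exp.comp hv1
  have hpd : ∀ k x, pd k (fun y => Real.exp (v y)) x = Real.exp (v x) * pd k v x := by
    intro k x
    have := ((hv1.differentiable (by norm_num) x).hasFDerivAt).exp
    unfold pd
    rw [this.fderiv]; simp
  have hs : ∀ k, HasCompactSupport fun x : E2 => chi κ R x * x k := fun k =>
    compact_of_zero (R := R ^ 2) fun z hz => by simp [hC.chi_zero hz]
  have i0 := ibp hcd (Cut.xi_cd κ R 0) (hs 0) 0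
  have i1 := ibp hcd (Cut.xi_cd κ R 1) (hs 1) 1
  simp only [hpd, Cut.pd_xi] at i0 i1
  have cx := fun k => (Cut.xi_cd κ R k).continuous
  have cp := fun k => pd_cont hv1 k
  have ce := h.expv_cont
  have cc := fun k => pd_cont (Cut.chi_cd κ R) k
  have cchi := (Cut.chi_cd κ R).continuous
  have J1 : ∀ k, Integrable fun x => Real.exp (v x) * pd k v x * (chi κ R x * x k) := fun k =>
    int_supp (r := R ^ 2) (ce.mul (cp k)) (cx k) (fun z hz => by simp [hC.chi_zero hz])
  have J2 : ∀ k, Integrable fun x => Real.exp (v x) * (chi κ R x + x k * pd k (chi κ R) x) := fun k =>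
    int_supp (r := R ^ 2) ce (cchi.add ((coord_cont k).mul (cc k)))
      (fun z hz => by simp [hC.chi_zero hz, hC.pd_chi, hC.m_zero hz])
  have e1 : ∫ x, Real.exp (v x) * XV κ R v x = (∫ x, Real.exp (v x) * pd 0 v x * (chi κ R x * x 0))
      + ∫ x, Real.exp (v x) * pd 1 v x * (chi κ R x * x 1) := by
    rw [← integral_add (J1 0) (J1 1)]; congr 1; ext x; unfold XV; ring
  have e2 : ∫ x, Real.exp (v x) * DX κ R x = (∫ x, Real.exp (v x) * (chi κ R x + x 0 * pd 0 (chi κ R) x))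
      + ∫ x, Real.exp (v x) * (chi κ R x + x 1 * pd 1 (chi κ R) x) := by
    rw [← integral_add (J2 0) (J2 1)]; congr 1; ext x; unfold DX
    have := hC.radial x
    have e : eta κ R x = -(x 0 * pd 0 (chi κ R) x + x 1 * pd 1 (chi κ R) x) := by linarith
    rw [e]; ring
  rw [e1, e2, i0, i1]; ring

lemma poh2 (h : Hyp b C0 L τ c v W) (hC : Cut κ R) {K : ℝ} (hRL : R ^ 2 ≤ L)
    (hK : ∀ j x, ‖x‖ ≤ R ^ 2 → |pd j v x| ≤ K) :
    (∫ x, -lapl v x * DX κ R x) - τ * C0 * (4 + 2 * R ^ 2 * K) ≤ -∫ x, -lapl v x * XV κ R v x := by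
  have ce := h.expv_cont
  have hg := h.gcont
  have hX := h.XV_cont (κ := κ) (R := R)
  have hD := DX_cont hC
  have hK0 : 0 ≤ K := (abs_nonneg _).trans (hK 0 0 (by simp; positivity))
  have p1 := h.poh1 hC
  have I1 := int_supp ce hX (XV_zero hC v)
  have I2 := int_supp ce hD (DX_zero hC)
  have I3 := int_supp hg hX (XV_zero hC v)
  have I4 := int_supp hg hD (DX_zero hC)
  have e : (∫ x, -lapl v x * DX κ R x) + ∫ x, -lapl v x * XV κ R v x
      = ∫ x, (-lapl v x - c * Real.exp (v x)) * (DX κ R x + XV κ R v x) := by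
    have e1 : ∀ x, (-lapl v x - c * Real.exp (v x)) * (DX κ R x + XV κ R v x)
      = (-lapl v x * DX κ R x + -lapl v x * XV κ R v x)
        - c * (Real.exp (v x) * XV κ R v x + Real.exp (v x) * DX κ R x) := fun x => by ring
    simp only [e1]
    have I5 : Integrable fun x => -lapl v x * DX κ R x + -lapl v x * XV κ R v x := I4.add I3
    have I6 : Integrable fun x => c * (Real.exp (v x) * XV κ R v x + Real.exp (v x) * DX κ R x) :=
      (I1.add I2).const_mul c
    rw [integral_sub I5 I6, integral_add I4 I3, integral_const_mul,
      integral_add I1 I2, p1]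
    ring
  have bd : |∫ x, (-lapl v x - c * Real.exp (v x)) * (DX κ R x + XV κ R v x)|
      ≤ τ * (4 + 2 * R ^ 2 * K) * ∫ x in ball (0 : E2) L, Real.exp (v x) := by
    have : ∫ x, (-lapl v x - c * Real.exp (v x)) * (DX κ R x + XV κ R v x)
      = ∫ x in ball (0 : E2) L, (-lapl v x - c * Real.exp (v x)) * (DX κ R x + XV κ R v x) := by
      symm
      apply setIntegral_eq_integral_of_forall_compl_eq_zero
      intro x hx
      have hx' : R ^ 2 ≤ ‖x‖ := by rw [mem_ball_zero_iff] at hx; linarith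
      rw [DX_zero hC x hx', XV_zero hC v x hx']; simp
    rw [this, ← integral_const_mul, ← Real.norm_eq_abs]
    apply norm_integral_le_of_norm_le ((intOn_ball ce _ _).const_mul _)
    refine (ae_restrict_iff' measurableSet_ball).2 (Eventually.of_forall fun x hx => ?_)
    rw [mem_ball_zero_iff] at hx
    have hE := Real.exp_pos (v x)
    have a1 : |-lapl v x - c * Real.exp (v x)| ≤ τ * Real.exp (v x) := by
      rw [h.eq x hx, ← sub_mul, abs_mul, abs_of_pos hE]
      exact mul_le_mul_of_nonneg_right (h.Wc x hx) hE.le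
    have a2 : |DX κ R x + XV κ R v x| ≤ 4 + 2 * R ^ 2 * K := by
      by_cases hxR : R ^ 2 ≤ ‖x‖
      · rw [DX_zero hC x hxR, XV_zero hC v x hxR]; simp; positivity
      · have hxR' := (not_le.1 hxR).le
        have b1 : |DX κ R x| ≤ 4 := by
          unfold DX
          have h1 := hC.eta_nonneg x
          have h2 := hC.eta_le1 x
          have h3 := Cut.chi_nonneg κ R x
          have h4 := hC.chi_le x
          have h5 := hC.κ1
          rw [abs_le]; constructor <;> linarith
        have b2 : ∀ j, |x j * pd j v x| ≤ R ^ 2 * K := by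
          intro j
          rw [abs_mul]
          exact mul_le_mul ((coord_le x j).trans hxR') (hK j x hxR') (abs_nonneg _) (by positivity)
        have b3 : |XV κ R v x| ≤ 2 * R ^ 2 * K := by
          unfold XV
          rw [abs_mul, abs_of_nonneg (Cut.chi_nonneg κ R x)]
          have h4 := hC.chi_le x
          have h3 := Cut.chi_nonneg κ R x
          have h5 := abs_add_le (x 0 * pd 0 v x) (x 1 * pd 1 v x)
          have h6 := b2 0
          have h7 := b2 1
          have h8 : |x 0 * pd 0 v x + x 1 * pd 1 v x| ≤ 2 * R ^ 2 * K := by linarith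
          calc _ ≤ 1 * (2 * R ^ 2 * K) := mul_le_mul h4 h8 (abs_nonneg _) zero_le_one
            _ = _ := one_mul _
        exact (abs_add_le _ _).trans (add_le_add b1 b3)
    rw [norm_mul, Real.norm_eq_abs, Real.norm_eq_abs]
    calc _ ≤ (τ * Real.exp (v x)) * (4 + 2 * R ^ 2 * K) :=
          mul_le_mul a1 a2 (abs_nonneg _) (mul_nonneg h.τ0 hE.le)
      _ = _ := by ring
  have hfin : τ * (4 + 2 * R ^ 2 * K) * ∫ x in ball (0 : E2) L, Real.exp (v x) ≤ τ * C0 * (4 + 2 * R ^ 2 * K) := by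
    have h1 : 0 ≤ τ * (4 + 2 * R ^ 2 * K) := mul_nonneg h.τ0 (by positivity)
    have := mul_le_mul_of_nonneg_left h.int h1
    linarith
  have := (abs_le.1 (bd.trans hfin)).2
  linarith

end Hyp
end Aux

namespace Aux

lemma int_bdd {F : E2 → ℝ} (hF : Measurable F) {r C : ℝ} (hb : ∀ w, ‖w‖ < r → |F w| ≤ C)
    (h0 : ∀ w, r ≤ ‖w‖ → F w = 0) : Integrable F := by
  refine Integrable.mono' (intOn_cst C r) hF.aestronglyMeasurable (Eventually.of_forall fun w => ?_)
  by_cases hw : w ∈ ball (0 : E2) r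
  · rw [Set.indicator_of_mem hw]; exact hb w (by simpa using hw)
  · rw [Set.indicator_of_notMem hw, h0 w (by simpa using hw)]; simp

noncomputable def kk (κ R ε ρ : ℝ) (x y : E2) : ℝ :=
  chi κ R x * (x 0 * (x 0 - y 0) + x 1 * (x 1 - y 1)) * ker ε ρ (x - y)

lemma cs2 (x w : E2) : |x 0 * w 0 + x 1 * w 1| ≤ ‖x‖ * ‖w‖ := by
  apply abs_le_of_sq_le_sq _ (by positivity)
  rw [mul_pow, normsq, normsq]
  nlinarith [sq_nonneg (x 0 * w 1 - x 1 * w 0)]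

namespace Cut
variable {κ R ε ρ : ℝ}

lemma kk_sym (h : Cut κ R) (hε : 0 < ε) (hρ : ε ≤ ρ) (x y : E2) :
    kk κ R ε ρ x y + kk κ R ε ρ y x ≤ (chi κ R x + chi κ R y) / 2 := by
  have hk := ker_nonneg hε hρ (x - y)
  have hm := ker_mul_le ε ρ (x - y)
  have hn : ker ε ρ (y - x) = ker ε ρ (x - y) := by rw [← ker_neg, neg_sub]
  have hw : ‖x - y‖ ^ 2 = (x 0 - y 0) ^ 2 + (x 1 - y 1) ^ 2 := by rw [normsq]; simp
  have hx := normsq x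
  have hy := normsq y
  have h1 : (chi κ R x - chi κ R y) * (‖x‖ ^ 2 - ‖y‖ ^ 2) ≤ 0 := by
    rcases le_total ‖x‖ ‖y‖ with hxy | hxy
    · have h2 := h.chi_anti hxy
      have h3 : ‖x‖ ^ 2 ≤ ‖y‖ ^ 2 := by gcongr
      nlinarith
    · have h2 := h.chi_anti hxy
      have h3 : ‖y‖ ^ 2 ≤ ‖x‖ ^ 2 := by gcongr
      nlinarith
  have c1 := chi_nonneg κ R x
  have c2 := chi_nonneg κ R y
  unfold kk
  rw [hn]
  set a := chi κ R x
  set d := chi κ R y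
  set k := ker ε ρ (x - y)
  have e : a * (x 0 * (x 0 - y 0) + x 1 * (x 1 - y 1)) * k + d * (y 0 * (y 0 - x 0) + y 1 * (y 1 - x 1)) * k
      = k * ‖x - y‖ ^ 2 * ((a + d) / 2) + k * ((a - d) * (‖x‖ ^ 2 - ‖y‖ ^ 2)) / 2 := by
    rw [hw, hx, hy]; ring
  rw [e]
  have h3 : k * ‖x - y‖ ^ 2 * ((a + d) / 2) ≤ 1 * ((a + d) / 2) :=
    mul_le_mul_of_nonneg_right hm (by linarith)
  have h4 : k * ((a - d) * (‖x‖ ^ 2 - ‖y‖ ^ 2)) ≤ 0 := mul_nonpos_of_nonneg_of_nonpos hk h1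
  linarith

lemma kk_abs (h : Cut κ R) (hε : 0 < ε) (hρ : ε ≤ ρ) (x y : E2) :
    |kk κ R ε ρ x y| ≤ ‖x‖ * ‖x - y‖ * ker ε ρ (x - y) := by
  have hk := ker_nonneg hε hρ (x - y)
  have h1 := cs2 x (x - y)
  simp only [PiLp.sub_apply] at h1
  unfold kk
  rw [abs_mul, abs_mul, abs_of_nonneg hk, abs_of_nonneg (chi_nonneg κ R x)]
  refine mul_le_mul_of_nonneg_right ?_ hk
  have := h.chi_le x
  nlinarith [abs_nonneg (x 0 * (x 0 - y 0) + x 1 * (x 1 - y 1)), chi_nonneg κ R x]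

lemma kk_zero (h : Cut κ R) {x y : E2} (hx : R ^ 2 ≤ ‖x‖) : kk κ R ε ρ x y = 0 := by
  simp [kk, h.chi_zero hx]

lemma kk_outer (h : Cut κ R) (hε : 0 < ε) (hρ : ε ≤ ρ) {x y : E2} (hy : R ^ 3 ≤ ‖y‖) :
    kk κ R ε ρ x y ≤ 1 / (R - 1) := by
  have hR := h.R2
  by_cases hx : R ^ 2 ≤ ‖x‖
  · rw [h.kk_zero hx]
    exact div_nonneg zero_le_one (by linarith)
  have hx' := (not_le.1 hx).le
  refine (le_abs_self _).trans ((h.kk_abs hε hρ x y).trans ?_)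
  have hw : R ^ 3 - R ^ 2 ≤ ‖x - y‖ := by
    have := norm_sub_norm_le y x
    rw [norm_sub_rev] at this
    linarith
  have hd : 0 < R ^ 3 - R ^ 2 := by
    have : R ^ 3 - R ^ 2 = R ^ 2 * (R - 1) := by ring
    rw [this]; apply mul_pos (by positivity); linarith
  have hk := ker_nonneg hε hρ (x - y)
  have hm := ker_mul_le ε ρ (x - y)
  have h1 : ‖x - y‖ * ker ε ρ (x - y) ≤ 1 / (R ^ 3 - R ^ 2) := by
    rw [le_div_iff₀ hd]
    calc _ ≤ ‖x - y‖ * ker ε ρ (x - y) * ‖x - y‖ := by gcongr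
      _ = ker ε ρ (x - y) * ‖x - y‖ ^ 2 := by ring
      _ ≤ 1 := hm
  calc _ = ‖x‖ * (‖x - y‖ * ker ε ρ (x - y)) := by ring
    _ ≤ R ^ 2 * (1 / (R ^ 3 - R ^ 2)) := by gcongr
    _ = _ := by
      have : R ^ 3 - R ^ 2 = R ^ 2 * (R - 1) := by ring
      have h3 : R - 1 ≠ 0 := by linarith
      rw [this]; field_simp

lemma kk_meas (κ R ε ρ : ℝ) : Measurable fun p : E2 × E2 => kk κ R ε ρ p.1 p.2 := by
  have h1 := (chi_cd κ R).continuous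
  have h2 := coord_cont 0
  have h3 := coord_cont 1
  unfold kk
  apply Measurable.mul
  · exact (by fun_prop : Continuous fun p : E2 × E2 => chi κ R p.1 * (p.1 0 * (p.1 0 - p.2 0) + p.1 1 * (p.1 1 - p.2 1))).measurable
  · exact (ker_meas ε ρ).comp (by fun_prop)

end Cut

namespace Hyp
variable {b C0 L τ c κ R ε ρ : ℝ} {v W : E2 → ℝ}

lemma Ph_eq (g : E2 → ℝ) (j : Fin 2) (x : E2) :
    Ph g j x ε ρ = ∫ y, g y * ((y j - x j) * ker ε ρ (x - y)) := by
  unfold Ph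
  rw [← integral_add_left_eq_self (μ := (volume : Measure E2))
    (fun y => g y * ((y j - x j) * ker ε ρ (x - y))) x]
  congr 1; ext w
  have e : x - (x + w) = -w := by abel
  rw [e, ker_neg]; simp

lemma Ph_int (h : Hyp b C0 L τ c v W) (hε : 0 < ε) (hρ : ε ≤ ρ) (j : Fin 2) {x : E2} (hx : ‖x‖ + ρ ≤ L) :
    Integrable fun y => -lapl v y * ((y j - x j) * ker ε ρ (x - y)) := by
  have hz : ∀ y, L ≤ ‖y‖ → ker ε ρ (x - y) = 0 := by
    intro y hy
    apply ker_zero hε hρ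
    have := norm_sub_norm_le y x
    rw [norm_sub_rev] at this
    linarith
  refine int_bdd (r := L) (C := b * ((2 * L) * (3 * (ε⁻¹) ^ 2))) ?_ ?_ ?_
  · have h2 := coord_cont j
    refine h.gcont.measurable.mul (Measurable.mul (by fun_prop) ((ker_meas ε ρ).comp (by fun_prop)))
  · intro y hy
    rw [abs_mul, abs_mul, abs_of_nonneg (h.g0 hy), abs_of_nonneg (ker_nonneg hε hρ _)]
    have h1 := h.gb hy
    have h2 := ker_le ε ρ (x - y)
    have h3 : |y j - x j| ≤ 2 * L := by
      have a1 := coord_le y j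
      have a2 := coord_le x j
      have a3 := abs_sub (y j) (x j)
      linarith
    have := h.g0 hy
    have := h.b0
    have := h.L1
    have := ker_nonneg hε hρ (x - y)
    gcongr
  · intro y hy; simp [hz y hy]

lemma XV_pt (h : Hyp b C0 L τ c v W) (hC : Cut κ R) (hε : 0 < ε) (hε1 : ε ≤ 1) (hρ : R ^ 2 ≤ ρ)
    (hL : R ^ 2 + 4 * ρ ≤ L) (x : E2) :
    -(2 * Real.pi * XV κ R v x) ≤ (∫ y in ball (0 : E2) L, -lapl v y * kk κ R ε ρ x y)
      + 2 * R ^ 2 * (Er b ρ + 6 * Real.pi * b * ε) := by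
  have hR := h.L1
  have hR2 := hC.R2
  have hR1 : 1 ≤ R ^ 2 := by nlinarith
  have hερ : ε ≤ ρ := by linarith
  have hEr : 0 ≤ Er b ρ := by
    have : 0 ≤ Real.log (4 * ρ) := Real.log_nonneg (by linarith)
    have := M_pos
    have := h.b0
    have : 0 < ρ := by linarith
    unfold Er; positivity
  have hb := h.b0
  by_cases hxR : R ^ 2 ≤ ‖x‖
  · simp only [XV_zero hC v x hxR, hC.kk_zero hxR, mul_zero, integral_zero, neg_zero, zero_add]
    positivity
  have hx := (not_le.1 hxR).le
  have key : ∫ y in ball (0 : E2) L, -lapl v y * kk κ R ε ρ x y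
      = -(chi κ R x * (x 0 * Ph (fun y => -lapl v y) 0 x ε ρ + x 1 * Ph (fun y => -lapl v y) 1 x ε ρ)) := by
    have e1 : ∫ y in ball (0 : E2) L, -lapl v y * kk κ R ε ρ x y = ∫ y, -lapl v y * kk κ R ε ρ x y := by
      apply setIntegral_eq_integral_of_forall_compl_eq_zero
      intro y hy
      have hy' : L ≤ ‖y‖ := by simpa using hy
      unfold kk
      rw [ker_zero hε hερ]
      · simp
      · have := norm_sub_norm_le y x
        rw [norm_sub_rev] at this
        linarith
    rw [e1, Ph_eq, Ph_eq, ← integral_const_mul, ← integral_const_mul,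
      ← integral_add ((h.Ph_int hε hερ 0 (by linarith)).const_mul _) ((h.Ph_int hε hερ 1 (by linarith)).const_mul _),
      ← integral_const_mul, ← integral_neg]
    congr 1; ext y; unfold kk; ring
  rw [key]
  have hj : ∀ j, |2 * Real.pi * pd j v x - Ph (fun y => -lapl v y) j x ε ρ| ≤ Er b ρ + 6 * Real.pi * b * ε := by
    intro j
    have h1 := h.Dv_far j (by linarith) (hx.trans hρ) (by linarith)
    have h2 := h.Dv_err (x := x) j hε.le (by linarith)
    rw [← h.Dv_ident j x hε hερ]
    rw [abs_le] at *
    constructor <;> linarith [h1.1, h1.2, h2.1, h2.2]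
  have hj2 : ∀ j, |x j * (2 * Real.pi * pd j v x - Ph (fun y => -lapl v y) j x ε ρ)|
      ≤ R ^ 2 * (Er b ρ + 6 * Real.pi * b * ε) := by
    intro j
    rw [abs_mul]
    exact mul_le_mul ((coord_le x j).trans hx) (hj j) (abs_nonneg _) (by positivity)
  have c0 := Cut.chi_nonneg κ R x
  have c1 := hC.chi_le x
  have a0 := (abs_le.1 (hj2 0)).1
  have a1 := (abs_le.1 (hj2 1)).1
  have hB : 0 ≤ R ^ 2 * (Er b ρ + 6 * Real.pi * b * ε) := by positivity
  set B := R ^ 2 * (Er b ρ + 6 * Real.pi * b * ε) with hBdef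
  unfold XV
  have e : 2 * R ^ 2 * (Er b ρ + 6 * Real.pi * b * ε) = 2 * B := by rw [hBdef]; ring
  rw [e]
  set X0 := x 0 * (2 * Real.pi * pd 0 v x - Ph (fun y => -lapl v y) 0 x ε ρ) with hX0
  set X1 := x 1 * (2 * Real.pi * pd 1 v x - Ph (fun y => -lapl v y) 1 x ε ρ) with hX1
  have fin : -(chi κ R x * (X0 + X1)) ≤ 2 * B := by nlinarith
  rw [hX0, hX1] at fin
  nlinarith [fin]

end Hyp
end Aux

namespace Aux
namespace Hyp
variable {b C0 L τ c κ R ε ρ : ℝ} {v W : E2 → ℝ}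

lemma kk_meas1 (κ R ε ρ : ℝ) (x : E2) : Measurable fun y => kk κ R ε ρ x y := by
  have h : Measurable fun y : E2 => (x, y) := measurable_prodMk_left
  have := (Cut.kk_meas κ R ε ρ).comp h
  exact this

lemma kk_bd (hC : Cut κ R) (hε : 0 < ε) (hρ : ε ≤ ρ) {S : ℝ} {x y : E2} (hx : ‖x‖ < S) (hy : ‖y‖ < S) :
    |kk κ R ε ρ x y| ≤ S * (2 * S) * (3 * (ε⁻¹) ^ 2) := by
  refine (hC.kk_abs hε hρ x y).trans ?_
  have h1 := ker_le ε ρ (x - y)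
  have h2 := ker_nonneg hε hρ (x - y)
  have h3 : ‖x - y‖ ≤ 2 * S := (norm_sub_le x y).trans (by linarith)
  have : 0 ≤ S := (norm_nonneg x).trans hx.le
  gcongr

lemma gg_int (h : Hyp b C0 L τ c v W) (hC : Cut κ R) (hε : 0 < ε) (hρ : ε ≤ ρ) {S : ℝ} (hS : S ≤ L) :
    Integrable (fun p : E2 × E2 => -lapl v p.1 * -lapl v p.2 * kk κ R ε ρ p.1 p.2)
      ((volume.restrict (ball (0 : E2) S)).prod (volume.restrict (ball (0 : E2) S))) := by
  have : IsFiniteMeasure (volume.restrict (ball (0 : E2) S)) :=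
    ⟨by rw [Measure.restrict_apply_univ]; exact measure_ball_lt_top⟩
  refine Integrable.of_bound ?_ (b * b * (S * (2 * S) * (3 * (ε⁻¹) ^ 2))) ?_
  · have h1 : Continuous fun p : E2 × E2 => -lapl v p.1 * -lapl v p.2 :=
      (h.gcont.comp continuous_fst).mul (h.gcont.comp continuous_snd)
    exact (h1.measurable.mul (Cut.kk_meas κ R ε ρ)).aestronglyMeasurable
  · rw [Measure.prod_restrict]
    refine (ae_restrict_iff' (measurableSet_ball.prod measurableSet_ball)).2 (Eventually.of_forall fun p hp => ?_)
    have h1 : ‖p.1‖ < S := by simpa using hp.1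
    have h2 : ‖p.2‖ < S := by simpa using hp.2
    have a1 := h.g0 (h1.trans_le hS)
    have a2 := h.g0 (h2.trans_le hS)
    have a3 := h.gb (h1.trans_le hS)
    have a4 := h.gb (h2.trans_le hS)
    have a5 := h.b0
    rw [Real.norm_eq_abs, abs_mul, abs_mul, abs_of_nonneg a1, abs_of_nonneg a2]
    have := kk_bd hC hε hρ h1 h2
    exact mul_le_mul (mul_le_mul a3 a4 a2 a5) this (abs_nonneg _) (by positivity)

lemma gg_sym (h : Hyp b C0 L τ c v W) (hC : Cut κ R) (hε : 0 < ε) (hρ : ε ≤ ρ) {S : ℝ} (hS : S ≤ L) :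
    ∫ x in ball (0 : E2) S, ∫ y in ball (0 : E2) S, -lapl v x * -lapl v y * kk κ R ε ρ x y
      ≤ 1 / 2 * (∫ x in ball (0 : E2) S, -lapl v x) * ∫ x in ball (0 : E2) S, -lapl v x * chi κ R x := by
  have I := h.gg_int hC hε hρ hS
  set ν := volume.restrict (ball (0 : E2) S) with hν
  have : IsFiniteMeasure ν :=
    ⟨by rw [hν, Measure.restrict_apply_univ]; exact measure_ball_lt_top⟩
  have I' : Integrable (fun p : E2 × E2 => -lapl v p.2 * -lapl v p.1 * kk κ R ε ρ p.2 p.1) (ν.prod ν) := I.swap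
  have e0 := integral_prod _ I
  simp only at e0
  rw [← e0]
  have e1 := integral_prod_swap (μ := ν) (ν := ν)
    (fun p : E2 × E2 => -lapl v p.1 * -lapl v p.2 * kk κ R ε ρ p.1 p.2)
  have g1 : Integrable (fun x => -lapl v x) ν := intOn_ball h.gcont 0 S
  have g2 : Integrable (fun x => -lapl v x * chi κ R x) ν :=
    intOn_ball (h.gcont.mul (Cut.chi_cd κ R).continuous) 0 S
  have P1 := g1.mul_prod g2
  have P2 := g2.mul_prod g1
  have key : (∫ p, (-lapl v p.1 * -lapl v p.2 * kk κ R ε ρ p.1 p.2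
        + -lapl v p.2 * -lapl v p.1 * kk κ R ε ρ p.2 p.1) ∂(ν.prod ν))
      ≤ ∫ p, (1 / 2 * (-lapl v p.1 * (-lapl v p.2 * chi κ R p.2))
          + 1 / 2 * ((-lapl v p.1 * chi κ R p.1) * -lapl v p.2)) ∂(ν.prod ν) := by
    apply integral_mono_ae (I.add I') ((P1.const_mul _).add (P2.const_mul _))
    rw [hν, Measure.prod_restrict]
    refine (ae_restrict_iff' (measurableSet_ball.prod measurableSet_ball)).2 (Eventually.of_forall fun p hp => ?_)
    have h1 : ‖p.1‖ < S := by simpa using hp.1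
    have h2 : ‖p.2‖ < S := by simpa using hp.2
    have a1 := h.g0 (h1.trans_le hS)
    have a2 := h.g0 (h2.trans_le hS)
    have := mul_le_mul_of_nonneg_left (hC.kk_sym hε hρ p.1 p.2) (mul_nonneg a1 a2)
    simp only [Pi.add_apply]
    linarith
  rw [integral_add I I', integral_add (P1.const_mul _) (P2.const_mul _), integral_const_mul,
    integral_const_mul, integral_prod_mul (fun x => -lapl v x) (fun x => -lapl v x * chi κ R x),
    integral_prod_mul (fun x => -lapl v x * chi κ R x) (fun x => -lapl v x)] at key
  have e2 : ∫ p, (-lapl v p.2 * -lapl v p.1 * kk κ R ε ρ p.2 p.1) ∂(ν.prod ν)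
      = ∫ p, (-lapl v p.1 * -lapl v p.2 * kk κ R ε ρ p.1 p.2) ∂(ν.prod ν) := e1
  rw [e2] at key
  linarith

set_option maxHeartbeats 1000000 in
lemma poh3 (h : Hyp b C0 L τ c v W) (hC : Cut κ R) (hε : 0 < ε) (hε1 : ε ≤ 1) (hρ : R ^ 2 ≤ ρ)
    (hL : R ^ 2 + 4 * ρ ≤ L) (hS : R ^ 3 ≤ L) :
    -(2 * Real.pi * ∫ x, -lapl v x * XV κ R v x)
      ≤ 1 / 2 * (∫ x in ball (0 : E2) (R ^ 3), -lapl v x) * (∫ x, -lapl v x * chi κ R x)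
        + M * (M / (R - 1) + 2 * R ^ 2 * (Er b ρ + 6 * Real.pi * b * ε)) := by
  have hR := hC.R2
  have hR1 : 1 ≤ R ^ 2 := by nlinarith
  have hR3 : R ^ 2 ≤ R ^ 3 := by nlinarith
  have hερ : ε ≤ ρ := by linarith
  have hEr : 0 ≤ Er b ρ := by
    have : 0 ≤ Real.log (4 * ρ) := Real.log_nonneg (by linarith)
    have := M_pos
    have := h.b0
    have : 0 < ρ := by linarith
    unfold Er; positivity
  have hb := h.b0
  set S := R ^ 3 with hSd
  set Q := M / (R - 1) + 2 * R ^ 2 * (Er b ρ + 6 * Real.pi * b * ε) with hQ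
  have hQ0 : 0 ≤ Q := by
    have : 0 < R - 1 := by linarith
    have := M_pos
    rw [hQ]; positivity
  have I := h.gg_int hC hε hερ hS
  have cX := h.XV_cont (κ := κ) (R := R)
  have e1 : ∫ x, -lapl v x * XV κ R v x = ∫ x in ball (0 : E2) S, -lapl v x * XV κ R v x := by
    symm
    apply setIntegral_eq_integral_of_forall_compl_eq_zero
    intro x hx
    rw [XV_zero hC v x (hR3.trans (by simpa using hx))]; simp
  have e2 : ∫ x, -lapl v x * chi κ R x = ∫ x in ball (0 : E2) S, -lapl v x * chi κ R x := by
    symm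
    apply setIntegral_eq_integral_of_forall_compl_eq_zero
    intro x hx
    rw [hC.chi_zero (hR3.trans (by simpa using hx))]; simp
  rw [e1, e2]
  have hsub : ball (0 : E2) S ⊆ ball 0 L := ball_subset_ball hS
  -- pointwise
  have pt : ∀ x ∈ ball (0 : E2) S, -(2 * Real.pi * XV κ R v x)
      ≤ (∫ y in ball (0 : E2) S, -lapl v y * kk κ R ε ρ x y) + Q := by
    intro x hx
    rw [mem_ball_zero_iff] at hx
    have p := h.XV_pt hC hε hε1 hρ hL x
    have km := kk_meas1 κ R ε ρ x
    have kI : IntegrableOn (fun y => -lapl v y * kk κ R ε ρ x y) (ball (0 : E2) L) := by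
      have : IsFiniteMeasure (volume.restrict (ball (0 : E2) L)) :=
        ⟨by rw [Measure.restrict_apply_univ]; exact measure_ball_lt_top⟩
      refine Integrable.of_bound ?_ (b * (L * (2 * L) * (3 * (ε⁻¹) ^ 2))) ?_
      · exact (h.gcont.measurable.mul km).aestronglyMeasurable
      · refine (ae_restrict_iff' measurableSet_ball).2 (Eventually.of_forall fun y hy => ?_)
        have hy' : ‖y‖ < L := by simpa using hy
        rw [Real.norm_eq_abs, abs_mul, abs_of_nonneg (h.g0 hy')]
        exact mul_le_mul (h.gb hy') (kk_bd hC hε hερ (hx.trans_le hS) hy') (abs_nonneg _) hb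
    have sp := setIntegral_sdiff (μ := volume) measurableSet_ball kI hsub
    have o : ∫ y in ball (0 : E2) L \ ball 0 S, -lapl v y * kk κ R ε ρ x y ≤ M / (R - 1) := by
      have o1 : ∫ y in ball (0 : E2) L \ ball 0 S, -lapl v y * kk κ R ε ρ x y
          ≤ ∫ y in ball (0 : E2) L \ ball 0 S, -lapl v y * (1 / (R - 1)) := by
        apply setIntegral_mono_on (kI.mono_set Set.sdiff_subset)
          (((intOn_ball h.gcont 0 L).mono_set Set.sdiff_subset).mul_const _)
          (MeasurableSet.diff measurableSet_ball measurableSet_ball)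
        intro y hy
        have hy1 : ‖y‖ < L := by simpa using hy.1
        have hy2 : S ≤ ‖y‖ := by simpa using hy.2
        exact mul_le_mul_of_nonneg_left (hC.kk_outer hε hερ hy2) (h.g0 hy1)
      rw [integral_mul_const] at o1
      have o2 := h.massSub (S := ball (0 : E2) L \ ball 0 S) Set.sdiff_subset
      have : 0 ≤ 1 / (R - 1) := div_nonneg zero_le_one (by linarith)
      have := mul_le_mul_of_nonneg_right o2 this
      calc _ ≤ _ := o1
        _ ≤ _ := this
        _ = _ := by ring
    rw [hQ]
    linarith
  have hI2 : IntegrableOn (fun x => ∫ y in ball (0 : E2) S, -lapl v x * -lapl v y * kk κ R ε ρ x y) (ball (0 : E2) S) :=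
    I.integral_prod_left
  have main : ∫ x in ball (0 : E2) S, -(2 * Real.pi) * (-lapl v x * XV κ R v x)
      ≤ ∫ x in ball (0 : E2) S, ((∫ y in ball (0 : E2) S, -lapl v x * -lapl v y * kk κ R ε ρ x y) + -lapl v x * Q) := by
    apply setIntegral_mono_on ((intOn_ball (h.gcont.mul cX) 0 S).const_mul _)
      (hI2.add ((intOn_ball h.gcont 0 S).mul_const _)) measurableSet_ball
    intro x hx
    have hx' : ‖x‖ < L := by simpa using hsub hx
    have := mul_le_mul_of_nonneg_left (pt x hx) (h.g0 hx')
    simp only [mul_assoc, integral_const_mul, Pi.add_apply, Pi.mul_apply] at this ⊢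
    linarith
  rw [integral_const_mul, integral_add hI2 ((intOn_ball h.gcont 0 S).mul_const _), integral_mul_const] at main
  have s := h.gg_sym hC hε hερ hS
  have m := mul_le_mul_of_nonneg_right (h.massSub hsub) hQ0
  linarith

/-- Combined Pohozaev inequality. -/
lemma poh4 (h : Hyp b C0 L τ c v W) (hC : Cut κ R) (hε : 0 < ε) (hε1 : ε ≤ 1) (hρ : R ^ 2 ≤ ρ)
    (hL : R ^ 2 + 4 * ρ ≤ L) (hS : R ^ 3 ≤ L) (hE : Er b ρ ≤ 1) :
    (8 * Real.pi - ∫ x in ball (0 : E2) (R ^ 3), -lapl v x) * (∫ x, -lapl v x * chi κ R x)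
      ≤ 4 * Real.pi * (∫ x, -lapl v x * eta κ R x) + 2 * M * (M / (R - 1) + 2 * R ^ 2 * (Er b ρ + 6 * Real.pi * b * ε))
        + 4 * Real.pi * (τ * C0 * (4 + 2 * R ^ 2 * (1 + 6 * Real.pi * b + 6 * M))) := by
  have hR := hC.R2
  have hR1 : 1 ≤ R ^ 2 := by nlinarith
  have p2 := h.poh2 hC (K := 1 + 6 * Real.pi * b + 6 * M) (by linarith)
    (fun j x hx => h.grad_bound j (by linarith) (hx.trans hρ) (by linarith) hE)
  have p3 := h.poh3 hC hε hε1 hρ hL hS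
  have e : ∫ x, -lapl v x * DX κ R x = 2 * (∫ x, -lapl v x * chi κ R x) - ∫ x, -lapl v x * eta κ R x := by
    have i1 := int_supp (r := R ^ 2) h.gcont (Cut.chi_cd κ R).continuous (fun z hz => hC.chi_zero hz)
    have i2 := int_supp (r := R ^ 2) h.gcont hC.eta_cont (fun z hz => hC.eta_zero hz)
    rw [← integral_const_mul, ← integral_sub (i1.const_mul 2) i2]
    congr 1; ext x; unfold DX; ring
  rw [e] at p2
  have p2' := mul_le_mul_of_nonneg_left p2 (by positivity : 0 ≤ 4 * Real.pi)
  linarith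

end Hyp
end Aux

namespace Aux
/-- mass deficit -/
noncomputable def Tm (v : E2 → ℝ) (S : ℝ) : ℝ := 8 * Real.pi - ∫ x in ball (0 : E2) S, -lapl v x

namespace Hyp
variable {b C0 L τ c κ R ε ρ : ℝ} {v W : E2 → ℝ}

lemma ball_mono_mass (h : Hyp b C0 L τ c v W) {S S' : ℝ} (h1 : S ≤ S') (h2 : S' ≤ L) :
    ∫ x in ball (0 : E2) S, -lapl v x ≤ ∫ x in ball (0 : E2) S', -lapl v x := by
  apply setIntegral_mono_set (intOn_ball h.gcont 0 S')
  · refine (ae_restrict_iff' measurableSet_ball).2 (Eventually.of_forall fun x hx => ?_)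
    exact h.g0 (lt_of_lt_of_le (by simpa using hx) h2)
  · exact (ball_subset_ball h1).eventuallyLE

lemma Tm_lower (h : Hyp b C0 L τ c v W) {S : ℝ} (h1 : S ≤ L) : 0 ≤ Tm v S + τ := by
  have := h.ball_mono_mass h1 le_rfl
  have := h.mass
  unfold Tm; linarith

lemma Tm_upper (h : Hyp b C0 L τ c v W) {S : ℝ} (h1 : S ≤ L) : Tm v S ≤ 8 * Real.pi := by
  have : 0 ≤ ∫ x in ball (0 : E2) S, -lapl v x :=
    setIntegral_nonneg measurableSet_ball fun x hx => h.g0 (lt_of_lt_of_le (by simpa using hx) h1)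
  unfold Tm; linarith

lemma ring_mass (h : Hyp b C0 L τ c v W) {S S' : ℝ} (h1 : S ≤ S') (h2 : S' ≤ L) :
    ∫ x in ball (0 : E2) S' \ ball 0 S, -lapl v x ≤ Tm v S + τ := by
  rw [setIntegral_sdiff measurableSet_ball (intOn_ball h.gcont 0 S') (ball_subset_ball h1)]
  have := h.ball_mono_mass h2 le_rfl
  have := h.mass
  unfold Tm; linarith

lemma chi_mass (h : Hyp b C0 L τ c v W) (hC : Cut κ R) (hL : R ^ 2 ≤ L) {t : ℝ} (ht : 0 < t)
    (htL : t ≤ L) (htC : 6 * C0 ≤ Real.pi * t ^ 2) (hτ : τ ≤ 1 / (2 * t ^ 2)) :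
    1 / t ^ 2 * (Real.pi / (12 * (b + 2))) ≤ ∫ x, -lapl v x * chi κ R x := by
  have c1 := h.c_lower ht htL htC
  have hb := h.b0
  have t2 : 0 < t ^ 2 := by positivity
  have e1 : 1 / (2 * t ^ 2) = (1 / t ^ 2) / 2 := by field_simp
  have e2 : 2 / t ^ 2 = 2 * (1 / t ^ 2) := by ring
  rw [e1] at hτ
  rw [e2] at c1
  have hp : 0 < 1 / t ^ 2 := by positivity
  have c2 : 1 / t ^ 2 ≤ c - τ := by linarith
  have n1 := h.n1_lower (by linarith)
  have R2 := hC.R2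
  have hR1 : 1 ≤ R ^ 2 := by nlinarith
  have i1 := int_supp (r := R ^ 2) h.gcont (Cut.chi_cd κ R).continuous (fun z hz => hC.chi_zero hz)
  have n2 : ∫ x in ball (0 : E2) 1, -lapl v x * (1 / 4) ≤ ∫ x, -lapl v x * chi κ R x := by
    calc _ ≤ ∫ x in ball (0 : E2) 1, -lapl v x * chi κ R x := by
          apply setIntegral_mono_on ((intOn_ball h.gcont 0 1).mul_const _) i1.integrableOn measurableSet_ball
          intro x hx
          have hx' : ‖x‖ < 1 := by simpa using hx
          exact mul_le_mul_of_nonneg_left (hC.chi_one hx'.le) (h.g0 (hx'.trans_le h.L1))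
      _ ≤ _ := by
          apply setIntegral_le_integral i1
          refine Eventually.of_forall fun x => ?_
          by_cases hx : ‖x‖ < L
          · exact mul_nonneg (h.g0 hx) (Cut.chi_nonneg κ R x)
          · show 0 ≤ -lapl v x * chi κ R x
            rw [hC.chi_zero (hL.trans (not_lt.1 hx))]; simp
  rw [integral_mul_const] at n2
  have n3 : 1 / t ^ 2 * (Real.pi / (3 * (b + 2))) ≤ (c - τ) * (Real.pi / (3 * (b + 2))) :=
    mul_le_mul_of_nonneg_right c2 (by positivity)
  have e3 : Real.pi / (12 * (b + 2)) = Real.pi / (3 * (b + 2)) * (1 / 4) := by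
    field_simp; norm_num
  rw [e3, ← mul_assoc]
  linarith

lemma eta_mass (h : Hyp b C0 L τ c v W) (hC : Cut κ R) (hL : R ^ 2 ≤ L) {s : ℝ} (hs : 0 ≤ s) (hsR : s ^ 2 = R) :
    ∫ x, -lapl v x * eta κ R x ≤ 4 * κ * (M / R + Tm v s + τ) := by
  have hR := hC.R2
  have hκ := hC.κ0
  have hs1 : 1 ≤ s := by nlinarith
  have hsR' : s ≤ R := by nlinarith
  have hRR : R ≤ R ^ 2 := by nlinarith
  have hsL : s ≤ L := by linarith
  have i1 := int_supp (r := R ^ 2) h.gcont hC.eta_cont (fun z hz => hC.eta_zero hz)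
  have e1 : ∫ x, -lapl v x * eta κ R x = ∫ x in ball (0 : E2) L, -lapl v x * eta κ R x := by
    symm
    apply setIntegral_eq_integral_of_forall_compl_eq_zero
    intro x hx
    rw [hC.eta_zero (hL.trans (by simpa using hx))]; simp
  have e2 := setIntegral_sdiff (μ := volume) (f := fun x => -lapl v x * eta κ R x) (measurableSet_ball (x := (0 : E2)) (ε := s))
    (i1.integrableOn (s := ball (0 : E2) L)) (ball_subset_ball hsL)
  have b1 : ∫ x in ball (0 : E2) s, -lapl v x * eta κ R x ≤ M * (4 * κ / R) := by
    calc _ ≤ ∫ x in ball (0 : E2) s, -lapl v x * (4 * κ / R) := by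
          apply setIntegral_mono_on i1.integrableOn ((intOn_ball h.gcont 0 s).mul_const _) measurableSet_ball
          intro x hx
          have hx' : ‖x‖ < s := by simpa using hx
          refine mul_le_mul_of_nonneg_left (hC.eta_le2 ?_) (h.g0 (hx'.trans_le hsL))
          rw [← hsR]; gcongr
      _ ≤ _ := by
          rw [integral_mul_const]
          exact mul_le_mul_of_nonneg_right (h.massSub (ball_subset_ball hsL)) (by positivity)
  have b2 : ∫ x in ball (0 : E2) L \ ball 0 s, -lapl v x * eta κ R x ≤ (Tm v s + τ) * (4 * κ) := by
    calc _ ≤ ∫ x in ball (0 : E2) L \ ball 0 s, -lapl v x * (4 * κ) := by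
          apply setIntegral_mono_on i1.integrableOn
            (((intOn_ball h.gcont 0 L).mono_set Set.sdiff_subset).mul_const _)
            (MeasurableSet.diff measurableSet_ball measurableSet_ball)
          intro x hx
          have hx' : ‖x‖ < L := by simpa using hx.1
          exact mul_le_mul_of_nonneg_left (hC.eta_le1 x) (h.g0 hx')
      _ ≤ _ := by
          rw [integral_mul_const]
          exact mul_le_mul_of_nonneg_right (h.ring_mass hsL le_rfl) (by positivity)
  rw [e1]
  have : M * (4 * κ / R) = 4 * κ * (M / R) := by ring
  linarith

end Hyp
end Aux

namespace Aux

set_option maxHeartbeats 1000000 in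
lemma core (b C0 : ℝ) (hb : 0 ≤ b) : ∃ C : ℝ, 0 < C ∧ ∀ lam : ℝ, 1 ≤ lam → ∃ L0 τ0 : ℝ, 0 < τ0 ∧
    ∀ (L τ c : ℝ) (v W : E2 → ℝ), Hyp b C0 L τ c v W → L0 ≤ L → τ ≤ τ0 →
      Tm v (Real.exp (3 * lam)) ≤ C / lam * max (Tm v (Real.exp (lam / 2))) 0 + C / lam ^ 2 := by
  have hM := M_pos
  have hpi := Real.pi_pos
  set t : ℝ := 1 + 6 * |C0| / Real.pi with ht
  have t1 : 1 ≤ t := by rw [ht]; linarith [show 0 ≤ 6 * |C0| / Real.pi by positivity]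
  have htC : 6 * C0 ≤ Real.pi * t ^ 2 := by
    have h1 : t ≤ t ^ 2 := by nlinarith
    have h2 : Real.pi * t = Real.pi + 6 * |C0| := by rw [ht]; field_simp
    have h3 := le_abs_self C0
    have := mul_le_mul_of_nonneg_left h1 hpi.le
    linarith
  have t2 : 0 < t ^ 2 := by positivity
  set a : ℝ := 1 / t ^ 2 * (Real.pi / (12 * (b + 2))) with ha
  have a0 : 0 < a := by rw [ha]; positivity
  set D : ℝ := 16 * Real.pi * M + 8 * M ^ 2 + 8 * Real.pi + 2 with hD
  have D0 : 8 * Real.pi ≤ D := by rw [hD]; nlinarith [mul_pos hpi hM, sq_nonneg M]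
  refine ⟨D / a, by apply div_pos _ a0; linarith, fun lam hlam => ?_⟩
  have l0 : 0 < lam := by linarith
  set R := Real.exp lam with hR
  set κ := 1 / (2 * lam) with hκ
  have Rl : 1 + lam + lam ^ 2 / 2 ≤ R := Real.quadratic_le_exp_of_nonneg l0.le |> (by simpa using ·)
  have hC : Cut κ R := by
    refine ⟨by nlinarith, by positivity, ?_, ?_⟩
    · rw [hκ, div_le_div_iff₀ (by positivity) (by norm_num)]; linarith
    · rw [hκ, hR, Real.log_exp]; field_simp; exact le_rfl
  have hR2 := hC.R2
  have hR0 : 0 < R := by linarith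
  set η : ℝ := 1 / lam ^ 2 with hη
  have η0 : 0 < η := by positivity
  -- choose ρ
  obtain ⟨ρ, hρ1, hρ2, hρ3⟩ : ∃ ρ, R ^ 2 ≤ ρ ∧ Er b ρ ≤ 1 ∧ 4 * M * R ^ 2 * Er b ρ ≤ η / 3 := by
    have h1 := (Er_tendsto b).eventually_le_const (u := 1) one_pos
    have h2 := ((Er_tendsto b).const_mul (4 * M * R ^ 2)).eventually_le_const (u := η / 3) (by simp; positivity)
    obtain ⟨ρ, h⟩ := ((eventually_ge_atTop (R ^ 2)).and (h1.and h2)).exists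
    exact ⟨ρ, h.1, h.2.1, h.2.2⟩
  obtain ⟨ε, hε0, hε1, hε2⟩ : ∃ ε : ℝ, 0 < ε ∧ ε ≤ 1 ∧ 4 * M * R ^ 2 * (6 * Real.pi * b) * ε ≤ η / 3 := by
    set Z := 4 * M * R ^ 2 * (6 * Real.pi * b) with hZ
    have Z0 : 0 ≤ Z := by positivity
    refine ⟨min 1 (η / (3 * (Z + 1))), by positivity, min_le_left _ _, ?_⟩
    calc Z * min 1 (η / (3 * (Z + 1))) ≤ (Z + 1) * (η / (3 * (Z + 1))) :=
          mul_le_mul (by linarith) (min_le_right _ _) (by positivity) (by positivity)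
      _ = η / 3 := by field_simp
  set Y := 4 * Real.pi * (|C0| * (4 + 2 * R ^ 2 * (1 + 6 * Real.pi * b + 6 * M))) with hY
  have Y0 : 0 ≤ Y := by positivity
  refine ⟨max (R ^ 2 + 4 * ρ) (max (R ^ 3) t), min (1 / (2 * t ^ 2)) (min (η / (3 * (Y + 1))) η), by positivity, ?_⟩
  intro L τ c v W h hL hτ
  have L1 : R ^ 2 + 4 * ρ ≤ L := (le_max_left _ _).trans hL
  have L2 : R ^ 3 ≤ L := (le_max_left _ _).trans ((le_max_right _ _).trans hL)
  have L3 : t ≤ L := (le_max_right _ _).trans ((le_max_right _ _).trans hL)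
  have T1 : τ ≤ 1 / (2 * t ^ 2) := hτ.trans (min_le_left _ _)
  have T2 : τ ≤ η / (3 * (Y + 1)) := hτ.trans ((min_le_right _ _).trans (min_le_left _ _))
  have T3 : τ ≤ η := hτ.trans ((min_le_right _ _).trans (min_le_right _ _))
  have τ0 := h.τ0
  have L4 : R ^ 2 ≤ L := by linarith [sq_nonneg R]
  have G := h.chi_mass hC L4 (by linarith) L3 htC T1
  rw [← ha] at G
  have s1 : Real.exp (lam / 2) ^ 2 = R := by rw [hR, ← Real.exp_nat_mul]; congr 1; push_cast; ring
  have E := h.eta_mass hC L4 (Real.exp_pos (lam / 2)).le s1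
  have P := h.poh4 hC hε0 hε1 hρ1 L1 L2 hρ2
  have e3 : Real.exp (3 * lam) = R ^ 3 := by rw [hR, ← Real.exp_nat_mul]; norm_num
  rw [e3]
  change Tm v (R ^ 3) * _ ≤ _ at P
  set T := Tm v (R ^ 3) with hT
  set T' := Tm v (Real.exp (lam / 2)) with hT'
  set m := max T' 0 with hm
  have m0 : 0 ≤ m := le_max_right _ _
  have mT : T' ≤ m := le_max_left _ _
  -- bounds for the right side
  have r1 : 1 / R ≤ 2 * η := by
    rw [hη, div_le_iff₀ hR0, mul_assoc, one_div, ← div_eq_inv_mul, mul_div_assoc', le_div_iff₀ (by positivity)]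
    nlinarith
  have r2 : 1 / (R - 1) ≤ 4 * η := by
    have : 1 / (R - 1) ≤ 2 * (1 / R) := by
      rw [mul_one_div, div_le_div_iff₀ (by linarith) hR0]; linarith
    linarith
  have q1 : 4 * Real.pi * (4 * κ * (M / R + T' + τ)) ≤ 8 * Real.pi / lam * m + (16 * Real.pi * M + 8 * Real.pi) * η := by
    have e : 4 * Real.pi * (4 * κ * (M / R + T' + τ)) = 8 * Real.pi / lam * (M * (1 / R) + T' + τ) := by
      rw [hκ]; field_simp; ring
    rw [e]
    have h1 : M * (1 / R) + T' + τ ≤ m + (M * (2 * η) + η) := by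
      have := mul_le_mul_of_nonneg_left r1 hM.le
      linarith
    have h2 := mul_le_mul_of_nonneg_left h1 (by positivity : 0 ≤ 8 * Real.pi / lam)
    have h3 : 8 * Real.pi / lam ≤ 8 * Real.pi := div_le_self (by positivity) hlam
    have h4 := mul_le_mul_of_nonneg_right h3 (by positivity : 0 ≤ M * (2 * η) + η)
    linarith
  have q2 : 2 * M * (M / (R - 1) + 2 * R ^ 2 * (Er b ρ + 6 * Real.pi * b * ε)) ≤ 8 * M ^ 2 * η + η / 3 + η / 3 := by
    have h1 := mul_le_mul_of_nonneg_left r2 (by positivity : 0 ≤ 2 * M ^ 2)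
    have e : 2 * M * (M / (R - 1) + 2 * R ^ 2 * (Er b ρ + 6 * Real.pi * b * ε))
      = 2 * M ^ 2 * (1 / (R - 1)) + 4 * M * R ^ 2 * Er b ρ + 4 * M * R ^ 2 * (6 * Real.pi * b) * ε := by ring
    rw [e]; linarith
  have q3 : 4 * Real.pi * (τ * C0 * (4 + 2 * R ^ 2 * (1 + 6 * Real.pi * b + 6 * M))) ≤ η / 3 := by
    calc _ ≤ 4 * Real.pi * (τ * |C0| * (4 + 2 * R ^ 2 * (1 + 6 * Real.pi * b + 6 * M))) := by
          apply mul_le_mul_of_nonneg_left _ (by positivity)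
          exact mul_le_mul_of_nonneg_right (mul_le_mul_of_nonneg_left (le_abs_self C0) τ0) (by positivity)
      _ = τ * Y := by rw [hY]; ring
      _ ≤ η / (3 * (Y + 1)) * (Y + 1) := mul_le_mul T2 (by linarith) Y0 (by positivity)
      _ = η / 3 := by field_simp
  have E' := mul_le_mul_of_nonneg_left E (by positivity : 0 ≤ 4 * Real.pi)
  set X := 8 * Real.pi / lam * m + D * η with hX
  have X0 : 0 ≤ X := by positivity
  have PX : T * (∫ x, -lapl v x * chi κ R x) ≤ X := by
    have : D * η = (16 * Real.pi * M + 8 * Real.pi) * η + 8 * M ^ 2 * η + 2 * η := by rw [hD]; ring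
    linarith
  have TX : T ≤ X / a := by
    rw [le_div_iff₀ a0]
    by_cases hT0 : 0 ≤ T
    · exact (mul_le_mul_of_nonneg_left G hT0).trans PX
    · have : T * a ≤ 0 := mul_nonpos_of_nonpos_of_nonneg (not_le.1 hT0).le a0.le
      linarith
  refine TX.trans ?_
  have e5 : D / a / lam * m + D / a / lam ^ 2 = (D / lam * m + D * η) / a := by
    rw [hη]; field_simp
  rw [e5]
  gcongr
  rw [hX]; gcongr

lemma decay (b C0 : ℝ) (hb : 0 ≤ b) : ∃ C : ℝ, 0 < C ∧ ∀ mu : ℝ, 18 ≤ mu → ∃ L0 τ0 : ℝ, 0 < τ0 ∧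
    ∀ (L τ c : ℝ) (v W : E2 → ℝ), Hyp b C0 L τ c v W → L0 ≤ L → τ ≤ τ0 →
      Tm v (Real.exp mu) ≤ C / mu ^ 2 := by
  obtain ⟨C, hC, H⟩ := core b C0 hb
  have hpi := Real.pi_pos
  refine ⟨3 * C * (18 * C * (8 * Real.pi) + 324 * C) + 9 * C, by positivity, fun mu hmu => ?_⟩
  have m0 : 0 < mu := by linarith
  obtain ⟨L1, τ1, t1, H1⟩ := H (mu / 3) (by linarith)
  obtain ⟨L2, τ2, t2, H2⟩ := H (mu / 18) (by linarith)
  refine ⟨max (max L1 L2) (Real.exp mu), min τ1 τ2, by positivity, fun L τ c v W h hL hτ => ?_⟩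
  have a1 := H1 L τ c v W h ((le_max_left _ _).trans ((le_max_left _ _).trans hL)) (hτ.trans (min_le_left _ _))
  have a2 := H2 L τ c v W h ((le_max_right _ _).trans ((le_max_left _ _).trans hL)) (hτ.trans (min_le_right _ _))
  have e1 : 3 * (mu / 3) = mu := by ring
  have e2 : 3 * (mu / 18) = mu / 3 / 2 := by ring
  rw [e1] at a1
  rw [e2] at a2
  have a3 : max (Tm v (Real.exp (mu / 18 / 2))) 0 ≤ 8 * Real.pi := by
    refine max_le (h.Tm_upper ?_) (by positivity)
    refine le_trans (Real.exp_le_exp.2 ?_) ((le_max_right _ _).trans hL)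
    linarith
  have a4 : max (Tm v (Real.exp (mu / 3 / 2))) 0 ≤ (18 * C * (8 * Real.pi) + 324 * C) / mu := by
    refine max_le (a2.trans ?_) (by positivity)
    have h1 := mul_le_mul_of_nonneg_left a3 (by positivity : 0 ≤ C / (mu / 18))
    have e3 : C / (mu / 18) * (8 * Real.pi) = 18 * C * (8 * Real.pi) / mu := by field_simp
    have e4 : C / (mu / 18) ^ 2 ≤ 324 * C / mu := by
      have : C / (mu / 18) ^ 2 = 324 * C / mu / mu := by field_simp; norm_num
      rw [this]
      exact div_le_self (by positivity) (by linarith)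
    rw [add_div]; linarith
  have a5 := mul_le_mul_of_nonneg_left a4 (by positivity : 0 ≤ C / (mu / 3))
  refine a1.trans ?_
  have e6 : (3 * C * (18 * C * (8 * Real.pi) + 324 * C) + 9 * C) / mu ^ 2
    = C / (mu / 3) * ((18 * C * (8 * Real.pi) + 324 * C) / mu) + C / (mu / 3) ^ 2 := by
    field_simp; ring
  rw [e6]; linarith

end Aux

namespace Aux

noncomputable def plog (x : E2) : ℝ := Real.log (max 1 ‖x‖)

lemma plog_cont : Continuous plog := by
  unfold plog
  apply Continuous.log (by fun_prop)
  intro x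
  exact (lt_of_lt_of_le one_pos (le_max_left _ _)).ne'

lemma plog_nonneg (x : E2) : 0 ≤ plog x := Real.log_nonneg (le_max_left _ _)

lemma log_le_plog (x : E2) : Real.log ‖x‖ ≤ plog x := by
  rcases (norm_nonneg x).eq_or_lt with h | h
  · rw [← h, Real.log_zero]; exact plog_nonneg x
  · exact Real.log_le_log h (le_max_right _ _)

lemma plog_le {x : E2} {m : ℝ} (hm : 0 ≤ m) (hx : ‖x‖ < Real.exp m) : plog x ≤ m := by
  unfold plog
  rw [Real.log_le_iff_le_exp (lt_of_lt_of_le one_pos (le_max_left _ _))]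
  exact max_le (Real.one_le_exp hm) hx.le

lemma logmom1 (b C0 : ℝ) (hb : 0 ≤ b) : ∃ C : ℝ, 0 < C ∧ ∀ K : ℕ, ∃ L0 τ0 : ℝ, 0 < τ0 ∧
    ∀ (L τ c : ℝ) (v W : E2 → ℝ), Hyp b C0 L τ c v W → L0 ≤ L → τ ≤ τ0 →
      Real.exp (18 * 2 ^ K) ≤ L ∧
      ∫ x in ball (0 : E2) (Real.exp (18 * 2 ^ K)), plog x * -lapl v x ≤ 18 * M + C * (1 - (1 / 2) ^ K) := by
  obtain ⟨C, hC, H⟩ := decay b C0 hb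
  refine ⟨4 * (C + 1), by positivity, fun K => ?_⟩
  induction K with
  | zero =>
    refine ⟨Real.exp (18 * 2 ^ 0), 1, one_pos, fun L τ c v W h hL hτ => ⟨hL, ?_⟩⟩
    have : ∫ x in ball (0 : E2) (Real.exp (18 * 2 ^ 0)), plog x * -lapl v x
        ≤ ∫ x in ball (0 : E2) (Real.exp (18 * 2 ^ 0)), 18 * -lapl v x := by
      apply setIntegral_mono_on (intOn_ball (plog_cont.mul h.gcont) 0 _) ((intOn_ball h.gcont 0 _).const_mul _)
        measurableSet_ball
      intro x hx
      have hx' : ‖x‖ < Real.exp (18 * 2 ^ 0) := by simpa using hx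
      exact mul_le_mul_of_nonneg_right (plog_le (by norm_num) (by simpa using hx')) (h.g0 (hx'.trans_le hL))
    rw [integral_const_mul] at this
    have m := h.massSub (ball_subset_ball hL)
    simp only [pow_zero] at *
    linarith
  | succ K ih =>
    obtain ⟨L1, τ1, t1, H1⟩ := ih
    have p1 : (1 : ℝ) ≤ 2 ^ K := one_le_pow₀ (by norm_num)
    obtain ⟨L2, τ2, t2, H2⟩ := H (18 * 2 ^ K) (by linarith)
    refine ⟨max (max L1 L2) (Real.exp (18 * 2 ^ (K + 1))), min (min τ1 τ2) (1 / (18 * 2 ^ K * 2 ^ K)), by positivity,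
      fun L τ c v W h hL hτ => ?_⟩
    have hL3 : Real.exp (18 * 2 ^ (K + 1)) ≤ L := (le_max_right _ _).trans hL
    refine ⟨hL3, ?_⟩
    obtain ⟨hL4, a1⟩ := H1 L τ c v W h ((le_max_left _ _).trans ((le_max_left _ _).trans hL))
      (hτ.trans ((min_le_left _ _).trans (min_le_left _ _)))
    have a2 := H2 L τ c v W h ((le_max_right _ _).trans ((le_max_left _ _).trans hL))
      (hτ.trans ((min_le_left _ _).trans (min_le_right _ _)))
    have a3 := hτ.trans (min_le_right _ _)
    have hmono : Real.exp (18 * 2 ^ K) ≤ Real.exp (18 * 2 ^ (K + 1)) := by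
      apply Real.exp_le_exp.2; rw [pow_succ]; linarith
    have i := intOn_ball (plog_cont.mul h.gcont) 0 (Real.exp (18 * 2 ^ (K + 1)))
    have sp := setIntegral_sdiff (μ := volume) (measurableSet_ball (x := (0 : E2)) (ε := Real.exp (18 * 2 ^ K))) i
      (ball_subset_ball hmono)
    have o : ∫ x in ball (0 : E2) (Real.exp (18 * 2 ^ (K + 1))) \ ball 0 (Real.exp (18 * 2 ^ K)), plog x * -lapl v x
        ≤ ∫ x in ball (0 : E2) (Real.exp (18 * 2 ^ (K + 1))) \ ball 0 (Real.exp (18 * 2 ^ K)), (18 * 2 ^ (K + 1)) * -lapl v x := by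
      apply setIntegral_mono_on (i.mono_set Set.sdiff_subset)
        (((intOn_ball h.gcont 0 _).mono_set Set.sdiff_subset).const_mul _)
        (MeasurableSet.diff measurableSet_ball measurableSet_ball)
      intro x hx
      have hx' : ‖x‖ < Real.exp (18 * 2 ^ (K + 1)) := by simpa using hx.1
      exact mul_le_mul_of_nonneg_right (plog_le (by positivity) hx') (h.g0 (hx'.trans_le hL3))
    rw [integral_const_mul] at o
    have rm := h.ring_mass hmono hL3
    have rm' : Tm v (Real.exp (18 * 2 ^ K)) + τ ≤ C / (18 * 2 ^ K) ^ 2 + 1 / (18 * 2 ^ K * 2 ^ K) := by linarith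
    have o2 := mul_le_mul_of_nonneg_left (rm.trans rm') (by positivity : (0 : ℝ) ≤ 18 * 2 ^ (K + 1))
    have e1 : (18 * 2 ^ (K + 1) : ℝ) * (C / (18 * 2 ^ K) ^ 2 + 1 / (18 * 2 ^ K * 2 ^ K)) = (C / 9 + 2) * (1 / 2) ^ K := by
      rw [one_div_pow, pow_succ]; field_simp; ring
    rw [e1] at o2
    have q : 0 ≤ (1 / 2 : ℝ) ^ K := by positivity
    have e2 : (1 / 2 : ℝ) ^ (K + 1) = (1 / 2) ^ K / 2 := by rw [pow_succ]; ring
    rw [e2]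
    have q2 := mul_nonneg hC.le q
    simp only [Pi.mul_apply] at sp
    linarith

lemma logmom (b C0 : ℝ) (hb : 0 ≤ b) : ∃ C : ℝ, 0 < C ∧ ∀ K : ℕ, ∃ L0 τ0 : ℝ, 0 < τ0 ∧
    ∀ (L τ c : ℝ) (v W : E2 → ℝ), Hyp b C0 L τ c v W → L0 ≤ L → τ ≤ τ0 →
      ∫ x in ball (0 : E2) (Real.exp (18 * 2 ^ K)), 1 / (2 * Real.pi) * Real.log ‖x‖ * -lapl v x ≤ C := by
  obtain ⟨C, hC, H⟩ := logmom1 b C0 hb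
  have hM := M_pos
  have hpi := Real.pi_pos
  refine ⟨1 / (2 * Real.pi) * (18 * M + C), by positivity, fun K => ?_⟩
  obtain ⟨L0, τ0, t0, H1⟩ := H K
  refine ⟨L0, τ0, t0, fun L τ c v W h hL hτ => ?_⟩
  obtain ⟨hL', a⟩ := H1 L τ c v W h hL hτ
  by_cases hi : IntegrableOn (fun x : E2 => 1 / (2 * Real.pi) * Real.log ‖x‖ * -lapl v x) (ball (0 : E2) (Real.exp (18 * 2 ^ K)))
  · have : ∫ x in ball (0 : E2) (Real.exp (18 * 2 ^ K)), 1 / (2 * Real.pi) * Real.log ‖x‖ * -lapl v x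
        ≤ ∫ x in ball (0 : E2) (Real.exp (18 * 2 ^ K)), 1 / (2 * Real.pi) * (plog x * -lapl v x) := by
      apply setIntegral_mono_on hi ((intOn_ball (plog_cont.mul h.gcont) 0 _).const_mul _) measurableSet_ball
      intro x hx
      have hx' : ‖x‖ < L := lt_of_lt_of_le (by simpa using hx) hL'
      have := mul_le_mul_of_nonneg_left (mul_le_mul_of_nonneg_right (log_le_plog x) (h.g0 hx'))
        (by positivity : 0 ≤ 1 / (2 * Real.pi))
      simp only [Pi.mul_apply]
      linarith
    refine this.trans ?_
    rw [integral_const_mul]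
    apply mul_le_mul_of_nonneg_left _ (by positivity)
    refine a.trans ?_
    have : 0 ≤ C * (1 / 2) ^ K := by positivity
    linarith
  · rw [integral_undef hi]; positivity

end Aux

namespace Aux

lemma lapl_congr {f g : E2 → ℝ} {x : E2} (h : f =ᶠ[nhds x] g) : lapl f x = lapl g x := by
  have h1 : ∀ k, pd k f =ᶠ[nhds x] pd k g := fun k => by
    filter_upwards [h.fderiv (𝕜 := ℝ)] with y hy
    unfold pd; rw [hy]
  have h2 : ∀ k, pd k (pd k f) x = pd k (pd k g) x := fun k => by
    conv_lhs => unfold pd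
    conv_rhs => unfold pd
    have := (h1 k).fderiv_eq (𝕜 := ℝ)
    unfold pd at this
    rw [this]
  unfold lapl; rw [h2, h2]

lemma pd_diffAt {u : E2 → ℝ} {y : E2} (hu : ContDiffAt ℝ 2 u y) (k : Fin 2) : DifferentiableAt ℝ (pd k u) y := by
  have h1 : ContDiffAt ℝ 1 (fderiv ℝ u) y := hu.fderiv_right (m := 1) (by norm_num)
  have h2 := h1.differentiableAt (by norm_num)
  exact h2.clm_apply (differentiableAt_const _)

lemma lapl_scale {u : E2 → ℝ} (x θ : E2) (t a : ℝ) (hu : ∀ᶠ y in nhds (x + t • θ), ContDiffAt ℝ 2 u y) :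
    lapl (fun z => u (x + t • z) - a) θ = t ^ 2 * lapl u (x + t • θ) := by
  have hc : Tendsto (fun z : E2 => x + t • z) (nhds θ) (nhds (x + t • θ)) :=
    (by fun_prop : Continuous fun z : E2 => x + t • z).tendsto θ
  have key : ∀ k, pd k (pd k (fun z => u (x + t • z) - a)) θ = t ^ 2 * pd k (pd k u) (x + t • θ) := by
    intro k
    have h1 : pd k (fun z => u (x + t • z) - a) =ᶠ[nhds θ] fun z => t * pd k u (x + t • z) := by
      filter_upwards [hc.eventually hu] with z hz
      rw [← pd_comp x z t (hz.differentiableAt (by norm_num)) k]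
      unfold pd
      rw [fderiv_sub_const]
    have h2 : pd k (pd k (fun z => u (x + t • z) - a)) θ = pd k (fun z => t * pd k u (x + t • z)) θ := by
      show fderiv ℝ _ θ _ = fderiv ℝ _ θ _
      rw [h1.fderiv_eq]
    have h3 := pd_diffAt hu.self_of_nhds k
    have h4 : pd k (fun z => t * pd k u (x + t • z)) θ = t * pd k (fun z => pd k u (x + t • z)) θ := by
      show fderiv ℝ _ θ _ = t * fderiv ℝ _ θ _
      rw [fderiv_const_mul]
      · rfl
      · exact DifferentiableAt.comp (f := fun z : E2 => x + t • z) θ h3 (by fun_prop)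
    rw [h2, h4, pd_comp x θ t h3 k]; ring
  unfold lapl
  rw [key, key]; ring

lemma setIntegral_scaleL (F : E2 → ℝ) (x : E2) {t : ℝ} (ht : 0 < t) (L : ℝ) :
    ∫ z in ball (0 : E2) L, F (x + t • z) = (t ^ 2)⁻¹ * ∫ y in ball x (t * L), F y := by
  rw [← integral_indicator measurableSet_ball, ← integral_indicator measurableSet_ball,
    ← integral_scale _ x ht]
  congr 1; ext z
  have : x + t • z ∈ ball x (t * L) ↔ z ∈ ball (0 : E2) L := by
    simp [norm_smul, abs_of_pos ht, ht]
  by_cases hz : z ∈ ball (0 : E2) L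
  · rw [Set.indicator_of_mem hz, Set.indicator_of_mem (this.2 hz)]
  · rw [Set.indicator_of_notMem hz, Set.indicator_of_notMem (fun h => hz (this.1 h))]

lemma exists_ext {v : E2 → ℝ} {L : ℝ} (hL : 0 < L) (hv : ∀ θ, ‖θ‖ < 2 * L → ContDiffAt ℝ 2 v θ) :
    ∃ w : E2 → ℝ, ContDiff ℝ 2 w ∧ ∀ θ, ‖θ‖ < (5 / 4) * L → w θ = v θ := by
  let f : ContDiffBump (0 : E2) := ⟨5 / 4 * L, 3 / 2 * L, by positivity, by linarith⟩
  refine ⟨fun θ => f θ * v θ, ?_, ?_⟩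
  · rw [contDiff_iff_contDiffAt]
    intro θ
    by_cases hθ : ‖θ‖ < 2 * L
    · exact f.contDiff.contDiffAt.mul (hv θ hθ)
    · have : (fun θ => f θ * v θ) =ᶠ[nhds θ] fun _ => 0 := by
        have ho : IsOpen {z : E2 | 3 / 2 * L < ‖z‖} := isOpen_lt continuous_const continuous_norm
        filter_upwards [ho.mem_nhds (show 3 / 2 * L < ‖θ‖ by linarith)] with z hz
        rw [f.zero_of_le_dist (by rw [dist_zero_right]; exact le_of_lt hz), zero_mul]
      exact contDiffAt_const.congr_of_eventuallyEq this
  · intro θ hθ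
    show f θ * v θ = _
    rw [f.one_of_mem_closedBall (by simpa using hθ.le), one_mul]

lemma transfer {b A s C0 δ r L τ : ℝ} {V u : E2 → ℝ} {x0 : E2} (hs : 0 < s)
    (hu : ContDiffOn ℝ 2 u (closedBall (0 : E2) 1))
    (hVb : ∀ x ∈ ball (0 : E2) 1, 0 ≤ V x ∧ V x ≤ b)
    (hVhol : ∀ x ∈ ball (0 : E2) 1, ∀ y ∈ ball (0 : E2) 1, |V x - V y| ≤ A * ‖x - y‖ ^ s)
    (hpde : ∀ x ∈ ball (0 : E2) 1, -(lapl u x) = V x * Real.exp (u x))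
    (hint : (∫ y in ball (0 : E2) 1, Real.exp (u y)) ≤ C0)
    (hxmem : x0 ∈ ball (0 : E2) 1)
    (hmax : ∀ y ∈ closedBall (0 : E2) 1, u y ≤ u x0)
    (hδ : ball x0 δ ⊆ ball (0 : E2) 1)
    (hr : r = Real.exp (-(u x0) / 2)) (hrL : r * L ≤ δ / 2) (hL : 1 ≤ L)
    (hτ : |A| * (r * L) ^ s ≤ τ) (hτ1 : τ ≤ 1)
    (hmass : |(∫ y in ball x0 (δ / 2), V y * Real.exp (u y)) - 8 * Real.pi| ≤ τ) :
    ∃ w, Hyp b C0 L τ (V x0) w (fun θ => V (x0 + r • θ)) ∧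
      ∀ θ, ‖θ‖ < L → -lapl w θ = V (x0 + r • θ) * Real.exp (u (x0 + r • θ) - u x0) := by
  have r0 : 0 < r := by rw [hr]; positivity
  have r2 : r ^ 2 = Real.exp (-(u x0)) := by
    rw [hr, ← Real.exp_nat_mul]; congr 1; push_cast; ring
  have τ0 : 0 ≤ τ := le_trans (by positivity) hτ
  have mem : ∀ θ : E2, ‖θ‖ < 2 * L → x0 + r • θ ∈ ball (0 : E2) 1 := by
    intro θ hθ
    apply hδ
    rw [mem_ball, dist_self_add_left, norm_smul, Real.norm_of_nonneg r0.le]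
    nlinarith
  have cd : ∀ y ∈ ball (0 : E2) 1, ContDiffAt ℝ 2 u y := fun y hy =>
    hu.contDiffAt (mem_of_superset (isOpen_ball.mem_nhds hy) ball_subset_closedBall)
  obtain ⟨w, w2, hw⟩ := exists_ext (v := fun z => u (x0 + r • z) - u x0) (L := L) (by linarith)
    (fun θ hθ => ((cd _ (mem θ hθ)).comp θ (by fun_prop)).sub contDiffAt_const)
  have hwL : ∀ θ, ‖θ‖ < L → w θ = u (x0 + r • θ) - u x0 := fun θ hθ => hw θ (by linarith)
  have lw : ∀ θ, ‖θ‖ < L → -lapl w θ = V (x0 + r • θ) * Real.exp (u (x0 + r • θ) - u x0) := by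
    intro θ hθ
    have e : w =ᶠ[nhds θ] fun z => u (x0 + r • z) - u x0 := by
      have ho : IsOpen {z : E2 | ‖z‖ < L} := isOpen_lt continuous_norm continuous_const
      filter_upwards [ho.mem_nhds hθ] with z hz using hwL z hz
    have m := mem θ (by linarith)
    rw [lapl_congr e, lapl_scale x0 θ r _ (by
      filter_upwards [isOpen_ball.mem_nhds m] with y hy using cd y hy)]
    have p := hpde _ m
    rw [← mul_neg, p, r2, sub_eq_add_neg, Real.exp_add]; ring
  have hsub : ball x0 (r * L) ⊆ ball x0 (δ / 2) := ball_subset_ball hrL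
  have δ0 : 0 < δ := by nlinarith
  have hsub1 : ball x0 (δ / 2) ⊆ ball 0 1 := (ball_subset_ball (by linarith)).trans hδ
  have mv := abs_le.1 hmass
  have hI : IntegrableOn (fun y => V y * Real.exp (u y)) (ball x0 (δ / 2)) := by
    by_contra hn
    rw [integral_undef hn] at mv
    have := Real.pi_gt_three
    linarith [mv.1]
  have hE : IntegrableOn (fun y => Real.exp (u y)) (ball (0 : E2) 1) :=
    ((Real.continuous_exp.comp_continuousOn hu.continuousOn).integrableOn_compact
      (isCompact_closedBall 0 1)).mono_set ball_subset_closedBall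
  have m0 : x0 + r • (0 : E2) = x0 := by simp
  have em : ∀ F : E2 → ℝ, (∫ θ in ball (0 : E2) L, F (x0 + r • θ) * Real.exp (u (x0 + r • θ) - u x0))
      = ∫ y in ball x0 (r * L), F y * Real.exp (u y) := by
    intro F
    have e1 : ∀ θ : E2, F (x0 + r • θ) * Real.exp (u (x0 + r • θ) - u x0)
        = r ^ 2 * (fun y => F y * Real.exp (u y)) (x0 + r • θ) := by
      intro θ
      simp only
      rw [r2, sub_eq_add_neg, Real.exp_add]; ring
    simp_rw [e1]
    rw [integral_const_mul, setIntegral_scaleL (fun y => F y * Real.exp (u y)) x0 r0 L, ← mul_assoc, mul_inv_cancel₀ (by positivity), one_mul]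
  refine ⟨w, ⟨w2, ?_, ?_, ?_, ?_, ?_, ?_, ?_, ?_, τ0, hτ1, (hVb x0 hxmem).1, (hVb x0 hxmem).2, hL⟩, lw⟩
  · intro θ hθ
    rw [hwL θ hθ]
    linarith [hmax _ (ball_subset_closedBall (mem θ (by linarith)))]
  · rw [hwL 0 (by simp; linarith), m0, sub_self]
  · intro θ hθ
    rw [lw θ hθ, hwL θ hθ]
  · exact fun θ hθ => (hVb _ (mem θ (by linarith))).1
  · exact fun θ hθ => (hVb _ (mem θ (by linarith))).2
  · intro θ hθ
    refine (hVhol _ (mem θ (by linarith)) _ hxmem).trans (le_trans ?_ hτ)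
    have : ‖x0 + r • θ - x0‖ ≤ r * L := by
      rw [add_sub_cancel_left, norm_smul, Real.norm_of_nonneg r0.le]; gcongr
    exact mul_le_mul (le_abs_self A) (Real.rpow_le_rpow (norm_nonneg _) this hs.le) (by positivity) (abs_nonneg _)
  · have e1 : ∫ θ in ball (0 : E2) L, Real.exp (w θ)
        = ∫ θ in ball (0 : E2) L, 1 * Real.exp (u (x0 + r • θ) - u x0) := by
      apply setIntegral_congr_fun measurableSet_ball
      intro θ hθ
      simp only
      rw [hwL θ (by simpa using hθ), one_mul]
    rw [e1, em (fun _ => 1)]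
    simp only [one_mul]
    refine le_trans ?_ hint
    apply setIntegral_mono_set hE (Eventually.of_forall fun y => (Real.exp_pos _).le)
    exact (hsub.trans hsub1).eventuallyLE
  · have e1 : ∫ θ in ball (0 : E2) L, -lapl w θ
        = ∫ θ in ball (0 : E2) L, V (x0 + r • θ) * Real.exp (u (x0 + r • θ) - u x0) := by
      apply setIntegral_congr_fun measurableSet_ball
      intro θ hθ
      exact lw θ (by simpa using hθ)
    rw [e1, em V]
    refine le_trans ?_ (show (∫ y in ball x0 (δ / 2), V y * Real.exp (u y)) ≤ _ by linarith [mv.2])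
    apply setIntegral_mono_set hI _ hsub.eventuallyLE
    refine (ae_restrict_iff' measurableSet_ball).2 (Eventually.of_forall fun y hy => ?_)
    exact mul_nonneg (hVb y (hsub1 hy)).1 (Real.exp_pos _).le

end Aux

namespace Aux

lemma infDist_le {x : E2} (hx : x ∈ ball (0 : E2) 1) : infDist x (sphere (0 : E2) 1) ≤ 1 - ‖x‖ := by
  have hx' : ‖x‖ < 1 := by simpa using hx
  by_cases h0 : x = 0
  · have m : EuclideanSpace.single (0 : Fin 2) (1 : ℝ) ∈ sphere (0 : E2) 1 := by simp
    refine (infDist_le_dist_of_mem m).trans ?_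
    rw [h0]; simp
  · have n0 : 0 < ‖x‖ := norm_pos_iff.2 h0
    have m : ‖x‖⁻¹ • x ∈ sphere (0 : E2) 1 := by
      simp [norm_smul, n0.ne']
    refine (infDist_le_dist_of_mem m).trans ?_
    have : x - ‖x‖⁻¹ • x = (1 - ‖x‖⁻¹) • x := by rw [sub_smul, one_smul]
    rw [dist_eq_norm, this, norm_smul, Real.norm_eq_abs, abs_of_nonpos (by
      rw [sub_nonpos]; exact (one_le_inv₀ n0).2 hx'.le)]
    have : ‖x‖⁻¹ * ‖x‖ = 1 := inv_mul_cancel₀ n0.ne'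
    linarith

lemma infDist_pos' {x : E2} (hx : x ∈ ball (0 : E2) 1) : 0 < infDist x (sphere (0 : E2) 1) := by
  have ne : (sphere (0 : E2) 1).Nonempty := ⟨EuclideanSpace.single (0 : Fin 2) (1 : ℝ), by simp⟩
  refine (isClosed_sphere.notMem_iff_infDist_pos ne).1 fun h => ?_
  have h1 : ‖x‖ = 1 := by simpa using h
  have h2 : ‖x‖ < 1 := by simpa using hx
  linarith

lemma ball_sub {x : E2} (hx : x ∈ ball (0 : E2) 1) : ball x (infDist x (sphere (0 : E2) 1)) ⊆ ball 0 1 := by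
  intro y hy
  have h1 := infDist_le hx
  rw [mem_ball, dist_eq_norm] at hy
  rw [mem_ball_zero_iff]
  have : ‖y‖ ≤ ‖x‖ + ‖y - x‖ := by
    calc ‖y‖ = ‖x + (y - x)‖ := by congr 1; abel
      _ ≤ _ := norm_add_le _ _
  linarith

end Aux

theorem stmt10
    (b A s C₀ : ℝ) (hs1 : 1/2 < s) (hs2 : s ≤ 1)
    (V u : ℕ → E2 → ℝ) (x_ : ℕ → E2) (δ r : ℕ → ℝ) (v : ℕ → E2 → ℝ)
    (hu : ∀ i, ContDiffOn ℝ 2 (u i) (closedBall (0:E2) 1))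
    (hVb : ∀ i, ∀ x ∈ ball (0:E2) 1, 0 ≤ V i x ∧ V i x ≤ b)
    (hVhol : ∀ i, ∀ x ∈ ball (0:E2) 1, ∀ y ∈ ball (0:E2) 1, |V i x - V i y| ≤ A * ‖x - y‖ ^ s)
    (hpde : ∀ i, ∀ x ∈ ball (0:E2) 1, -(lapl (u i) x) = V i x * Real.exp (u i x))
    (hbc : ∀ i, ∀ x ∈ sphere (0:E2) 1, u i x = 0)
    (hint : ∀ i, (∫ y in ball (0:E2) 1, Real.exp (u i y)) ≤ C₀)
    (hxmem : ∀ i, x_ i ∈ ball (0:E2) 1)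
    (hmax : ∀ i, ∀ y ∈ closedBall (0:E2) 1, u i y ≤ u i (x_ i))
    (hblow : Tendsto (fun i => u i (x_ i)) atTop atTop)
    (hδ : ∀ i, δ i = Metric.infDist (x_ i) (sphere (0:E2) 1))
    (hδ0 : Tendsto δ atTop (nhds 0))
    (hr : ∀ i, r i = Real.exp (-(u i (x_ i)) / 2))
    (hrδ : Tendsto (fun i => r i / δ i) atTop (nhds 0))
    (hmass : Tendsto (fun i => ∫ y in ball (x_ i) (δ i / 2), V i y * Real.exp (u i y)) atTop
      (nhds (8 * Real.pi)))
    (hbound : ∀ ε : ℝ, 0 < ε → ε < 1 → ∃ Cε : ℝ, ∀ i, ∀ y : E2, ‖y‖ = ε →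
      u i (x_ i + δ i • y) ≤ Cε)
    (hv : ∀ i θ, v i θ = u i (x_ i + r i • θ) - u i (x_ i)) :
    ∃ l : ℕ → ℝ, Tendsto l atTop atTop ∧ (∀ i, l i ≤ δ i / (2 * r i)) ∧
      ∃ C' : ℝ, ∀ i, (∫ θ in ball (0:E2) (l i),
        (1 / (2 * Real.pi)) * Real.log ‖θ‖ * (V i (x_ i + r i • θ) * Real.exp (v i θ))) ≤ C' := by
  have hb : 0 ≤ b := (hVb 0 _ (hxmem 0)).1.trans (hVb 0 _ (hxmem 0)).2
  have hs : 0 < s := by linarith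
  have r0 : ∀ i, 0 < r i := fun i => by rw [hr]; positivity
  have d0 : ∀ i, 0 < δ i := fun i => by rw [hδ]; exact Aux.infDist_pos' (hxmem i)
  have dsub : ∀ i, ball (x_ i) (δ i) ⊆ ball (0:E2) 1 := fun i => by rw [hδ]; exact Aux.ball_sub (hxmem i)
  have rt : Tendsto r atTop (nhds 0) := by
    have h1 : Tendsto (fun i => -(u i (x_ i)) / 2) atTop atBot := by
      have := (tendsto_neg_atTop_atBot.comp hblow).atBot_div_const (r := 2) two_pos
      exact this
    have := Real.tendsto_exp_atBot.comp h1
    exact this.congr fun i => (hr i).symm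
  obtain ⟨C, hC, H⟩ := Aux.logmom b C₀ hb
  set R : ℕ → ℝ := fun K => Real.exp (18 * 2 ^ K) with hR
  have key : ∀ K : ℕ, ∃ N : ℕ, ∀ i, N ≤ i → R K ≤ δ i / (2 * r i) ∧
      (∫ θ in ball (0:E2) (R K),
        (1 / (2 * Real.pi)) * Real.log ‖θ‖ * (V i (x_ i + r i • θ) * Real.exp (v i θ))) ≤ C := by
    intro K
    obtain ⟨L0, τ0, t0, HK⟩ := H K
    set L := max (max L0 1) (R K) with hL
    have L1 : 1 ≤ L := (le_max_right _ _).trans (le_max_left _ _)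
    have L2 : L0 ≤ L := (le_max_left _ _).trans (le_max_left _ _)
    have L3 : R K ≤ L := le_max_right _ _
    have Lp : 0 < L := by linarith
    set τ := min τ0 1 with hτ
    have tp : 0 < τ := by positivity
    have E1 : ∀ᶠ i in atTop, r i / δ i ≤ 1 / (2 * L) := hrδ.eventually_le_const (by positivity)
    have E2' : ∀ᶠ i in atTop, |A| * (r i * L) ^ s ≤ τ := by
      have h1 : Tendsto (fun i => |A| * (r i * L) ^ s) atTop (nhds (|A| * (0 * L) ^ s)) :=
        ((rt.mul_const L).rpow_const (Or.inr hs.le)).const_mul _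
      rw [zero_mul, Real.zero_rpow hs.ne', mul_zero] at h1
      exact h1.eventually_le_const tp
    have E3 : ∀ᶠ i in atTop, |(∫ y in ball (x_ i) (δ i / 2), V i y * Real.exp (u i y)) - 8 * Real.pi| ≤ τ := by
      have := hmass.eventually (closedBall_mem_nhds _ tp)
      filter_upwards [this] with i hi
      rwa [Real.dist_eq] at hi
    obtain ⟨N, hN⟩ := eventually_atTop.1 (E1.and (E2'.and E3))
    refine ⟨N, fun i hi => ?_⟩
    obtain ⟨e1, e2, e3⟩ := hN i hi
    have rp := r0 i
    have dp := d0 i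
    have rL : r i * L ≤ δ i / 2 := by
      rw [div_le_div_iff₀ dp (by positivity)] at e1
      linarith
    refine ⟨?_, ?_⟩
    · rw [le_div_iff₀ (by positivity)]
      have := mul_le_mul_of_nonneg_left L3 rp.le
      linarith
    · obtain ⟨w, hw, lw⟩ := Aux.transfer hs (hu i) (hVb i) (hVhol i) (hpde i) (hint i) (hxmem i) (hmax i)
        (dsub i) (hr i) rL L1 e2 (min_le_right _ _) e3
      have h1 := HK L τ _ w _ hw L2 (min_le_left _ _)
      refine le_trans (le_of_eq ?_) h1
      apply setIntegral_congr_fun measurableSet_ball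
      intro θ hθ
      have hθ' : ‖θ‖ < L := lt_of_lt_of_le (by simpa using hθ) L3
      simp only
      rw [lw θ hθ', hv]
  choose N hN using key
  set k : ℕ → ℕ := fun i => Nat.findGreatest (fun K => N K ≤ i) i with hk
  have kspec : ∀ i, N 0 ≤ i → N (k i) ≤ i := fun i hi =>
    Nat.findGreatest_spec (P := fun K => N K ≤ i) (Nat.zero_le i) hi
  have kt : Tendsto k atTop atTop := by
    rw [Filter.tendsto_atTop]
    intro K
    filter_upwards [eventually_ge_atTop (max K (N K))] with i hi
    exact Nat.le_findGreatest ((le_max_left _ _).trans hi) ((le_max_right _ _).trans hi)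
  have Rt : Tendsto R atTop atTop := by
    apply Real.tendsto_exp_atTop.comp
    exact (tendsto_pow_atTop_atTop_of_one_lt (by norm_num : (1 : ℝ) < 2)).const_mul_atTop (by norm_num)
  refine ⟨fun i => if N 0 ≤ i then R (k i) else 0, ?_, ?_, C, ?_⟩
  · refine (Rt.comp kt).congr' ?_
    filter_upwards [eventually_ge_atTop (N 0)] with i hi
    simp [hi]
  · intro i
    by_cases hi : N 0 ≤ i
    · simp only [hi, if_true]
      exact (hN (k i) i (kspec i hi)).1
    · simp only [hi, if_false]
      have := r0 i
      have := d0 i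
      positivity
  · intro i
    by_cases hi : N 0 ≤ i
    · simp only [hi, if_true]
      exact (hN (k i) i (kspec i hi)).2
    · simp only [hi, if_false, ball_zero, Measure.restrict_empty, integral_zero_measure]
      exact hC.le
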